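/- arXiv:2304.02124 — 8 statements merged into one kernel-verified Lean document; each statement's English description precedes it below -/
import Mathlib

section
/- Bit complexity of Richardson's iteration (error-contraction form): Let A ∈ ℝ^{n×d} with n ≥ d have full column rank, let b ∈ ℝⁿ, let λ ≥ 1 and ε ≥ 0, and let M, N ∈ ℝ^{d×d} be symmetric matrices such that AᵀA ⪯ M ⪯ λ·(AᵀA) and ‖N − M⁻¹‖_F ≤ ε/(d·λ·‖AᵀA‖₂). Let x* := (AᵀA)⁻¹Aᵀb, and from an arbitrary x⁽⁰⁾ ∈ ℝ^d define the iterates x⁽ᵏ⁺¹⁾ := x⁽ᵏ⁾ − N·(AᵀA·x⁽ᵏ⁾ − Aᵀb). Then for every k ≥ 0, ‖x⁽ᵏ⁾ − x*‖_M ≤ (1 − 1/λ + ε)^k · ‖x⁽⁰⁾ − x*‖_M. -/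
/-!
Write `G = AᵀA`, `E = N - M⁻¹` and `e` for the current error. Since `G x* = Aᵀ b`, one step sends
`e` to `e - N G e = M⁻¹ (M - G) e - E G e`, and the two terms are bounded separately in `‖·‖_M`.

* The hypotheses say `0 ⪯ M - G ⪯ (1 - 1/λ) M`, so `‖M⁻¹ (M - G) e‖_M ≤ (1 - 1/λ) ‖e‖_M`.
* From `M ⪯ λ G`, `G ⪯ ‖G‖₂ I` and `‖E v‖ ≤ ‖E‖_F ‖v‖`,
  `‖E G e‖_M ≤ √(λ ‖G‖₂) ‖E‖_F ‖G e‖ ≤ √λ ‖G‖₂ ‖E‖_F ‖e‖_G ≤ ε ‖e‖_M`.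

Both `‖M⁻¹ (M - G) e‖_M` and `‖G e‖` are instances of `mNorm_le_of_dotProduct_eq`, which is
Cauchy–Schwarz for a positive semidefinite form combined with a Loewner bound. The Euclidean norm
appears throughout as `mNorm 1`.
-/

open Matrix

/-- Frobenius norm of a real matrix. -/
noncomputable def frobNorm {m n : Type*} [Fintype m] [Fintype n] (M : Matrix m n ℝ) : ℝ :=
  Real.sqrt (∑ i, ∑ j, (M i j) ^ 2)

/-- Spectral (ℓ₂ operator) norm of a real square matrix. -/
noncomputable def specNorm {d : ℕ} (M : Matrix (Fin d) (Fin d) ℝ) : ℝ :=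
  ‖LinearMap.toContinuousLinearMap (Matrix.toEuclideanLin M)‖

/-- The norm `‖u‖_M = √(uᵀ M u)` induced by a symmetric positive semidefinite matrix `M`. -/
noncomputable def mNorm {d : ℕ} (M : Matrix (Fin d) (Fin d) ℝ) (u : Fin d → ℝ) : ℝ :=
  Real.sqrt (u ⬝ᵥ (M *ᵥ u))

open scoped MatrixOrder Matrix.Norms.L2Operator in
/-- A positive semidefinite form is the Euclidean inner product pulled back along a linear map. -/
lemma exists_inner_of_posSemidef {d : ℕ} {P : Matrix (Fin d) (Fin d) ℝ} (hP : P.PosSemidef) :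
    ∃ B : Matrix (Fin d) (Fin d) ℝ, ∀ u v : Fin d → ℝ,
      u ⬝ᵥ (P *ᵥ v) = inner ℝ (WithLp.toLp 2 (B *ᵥ u)) (WithLp.toLp 2 (B *ᵥ v)) := by
  obtain ⟨B, rfl⟩ := CStarAlgebra.nonneg_iff_eq_star_mul_self.mp hP.nonneg
  refine ⟨B, fun u v => ?_⟩
  rw [Matrix.star_eq_conjTranspose, Matrix.conjTranspose_eq_transpose_of_trivial,
    EuclideanSpace.inner_toLp_toLp, star_trivial (B *ᵥ u), ← Matrix.mulVec_mulVec,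
    Matrix.dotProduct_mulVec, Matrix.vecMul_transpose, dotProduct_comm]

lemma mNorm_eq_norm {d : ℕ} {P B : Matrix (Fin d) (Fin d) ℝ}
    (hB : ∀ u v : Fin d → ℝ,
      u ⬝ᵥ (P *ᵥ v) = inner ℝ (WithLp.toLp 2 (B *ᵥ u)) (WithLp.toLp 2 (B *ᵥ v)))
    (u : Fin d → ℝ) : mNorm P u = ‖WithLp.toLp 2 (B *ᵥ u)‖ := by
  rw [mNorm, hB, real_inner_self_eq_norm_sq, Real.sqrt_sq (norm_nonneg _)]

lemma mNorm_sub_le {d : ℕ} {P : Matrix (Fin d) (Fin d) ℝ} (hP : P.PosSemidef)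
    (u v : Fin d → ℝ) : mNorm P (u - v) ≤ mNorm P u + mNorm P v := by
  obtain ⟨B, hB⟩ := exists_inner_of_posSemidef hP
  simp only [mNorm_eq_norm hB, Matrix.mulVec_sub, WithLp.toLp_sub]
  exact norm_sub_le _ _

lemma dotProduct_mulVec_le_mNorm_mul {d : ℕ} {P : Matrix (Fin d) (Fin d) ℝ}
    (hP : P.PosSemidef) (u v : Fin d → ℝ) : u ⬝ᵥ (P *ᵥ v) ≤ mNorm P u * mNorm P v := by
  obtain ⟨B, hB⟩ := exists_inner_of_posSemidef hP
  simp only [mNorm_eq_norm hB, hB]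
  exact real_inner_le_norm _ _

lemma dotProduct_mulVec_self_nonneg {d : ℕ} {P : Matrix (Fin d) (Fin d) ℝ}
    (hP : P.PosSemidef) (u : Fin d → ℝ) : 0 ≤ u ⬝ᵥ (P *ᵥ u) := by
  simpa using hP.dotProduct_mulVec_nonneg u

lemma mNorm_le_sqrt_mul {d : ℕ} {P Q : Matrix (Fin d) (Fin d) ℝ} {c : ℝ} (hc : 0 ≤ c)
    (h : ∀ u : Fin d → ℝ, u ⬝ᵥ (P *ᵥ u) ≤ c * (u ⬝ᵥ (Q *ᵥ u))) (u : Fin d → ℝ) :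
    mNorm P u ≤ √c * mNorm Q u := by
  rw [mNorm, mNorm, ← Real.sqrt_mul hc]
  exact Real.sqrt_le_sqrt (h u)

/-- If `P ⪯ c Q` and `w` represents the functional `P v` against `Q` (tested on `w` itself), then
`‖w‖_Q ≤ √c ‖v‖_P`: indeed `‖w‖_Q² = wᵀ P v ≤ ‖w‖_P ‖v‖_P ≤ √c ‖w‖_Q ‖v‖_P`. -/
lemma mNorm_le_of_dotProduct_eq {d : ℕ} {P Q : Matrix (Fin d) (Fin d) ℝ} {c : ℝ} (hc : 0 ≤ c)
    (hP : P.PosSemidef) (hQ : Q.PosSemidef)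
    (h : ∀ u : Fin d → ℝ, u ⬝ᵥ (P *ᵥ u) ≤ c * (u ⬝ᵥ (Q *ᵥ u)))
    {w v : Fin d → ℝ} (hw : w ⬝ᵥ (Q *ᵥ w) = w ⬝ᵥ (P *ᵥ v)) :
    mNorm Q w ≤ √c * mNorm P v := by
  have hv : 0 ≤ mNorm P v := Real.sqrt_nonneg _
  have hsq : mNorm Q w * mNorm Q w ≤ (√c * mNorm P v) * mNorm Q w := by
    calc mNorm Q w * mNorm Q w = w ⬝ᵥ (P *ᵥ v) := by
          rw [mNorm, Real.mul_self_sqrt (dotProduct_mulVec_self_nonneg hQ w), hw]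
      _ ≤ mNorm P w * mNorm P v := dotProduct_mulVec_le_mNorm_mul hP w v
      _ ≤ (√c * mNorm Q w) * mNorm P v := by gcongr; exact mNorm_le_sqrt_mul hc h w
      _ = _ := by ring
  rcases (show 0 ≤ mNorm Q w from Real.sqrt_nonneg _).eq_or_lt with h0 | hpos
  · rw [← h0]; positivity
  · exact le_of_mul_le_mul_right hsq hpos

lemma dotProduct_mulVec_le_specNorm {d : ℕ} (P : Matrix (Fin d) (Fin d) ℝ) (u : Fin d → ℝ) :
    u ⬝ᵥ (P *ᵥ u) ≤ specNorm P * (u ⬝ᵥ ((1 : Matrix (Fin d) (Fin d) ℝ) *ᵥ u)) := by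
  set U : EuclideanSpace ℝ (Fin d) := WithLp.toLp 2 u
  have h1 : u ⬝ᵥ (P *ᵥ u) = inner ℝ U (WithLp.toLp 2 (P *ᵥ u)) := by
    rw [EuclideanSpace.inner_toLp_toLp, star_trivial, dotProduct_comm]
  have h2 : u ⬝ᵥ ((1 : Matrix (Fin d) (Fin d) ℝ) *ᵥ u) = ‖U‖ * ‖U‖ := by
    rw [← real_inner_self_eq_norm_mul_norm, EuclideanSpace.inner_toLp_toLp, star_trivial,
      Matrix.one_mulVec]
  have h3 : ‖(WithLp.toLp 2 (P *ᵥ u) : EuclideanSpace ℝ (Fin d))‖ ≤ specNorm P * ‖U‖ :=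
    (LinearMap.toContinuousLinearMap (Matrix.toEuclideanLin P)).le_opNorm U
  rw [h1, h2]
  calc _ ≤ ‖U‖ * ‖(WithLp.toLp 2 (P *ᵥ u) : EuclideanSpace ℝ (Fin d))‖ := real_inner_le_norm _ _
    _ ≤ ‖U‖ * (specNorm P * ‖U‖) := by gcongr
    _ = _ := by ring

lemma mNorm_one_mulVec_le {d : ℕ} (E : Matrix (Fin d) (Fin d) ℝ) (v : Fin d → ℝ) :
    mNorm 1 (E *ᵥ v) ≤ frobNorm E * mNorm 1 v := by
  simp only [mNorm, frobNorm, Matrix.one_mulVec]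
  rw [← Real.sqrt_mul (by positivity)]
  refine Real.sqrt_le_sqrt ?_
  rw [Finset.sum_mul]
  simp only [dotProduct, Matrix.mulVec, ← sq]
  exact Finset.sum_le_sum fun i _ => Finset.sum_mul_sq_le_sq_mul_sq _ _ _

/-- The first term of the error recursion: exact preconditioning by `M` contracts `‖·‖_M`. -/
lemma mNorm_exact_step_le {d : ℕ} {G M : Matrix (Fin d) (Fin d) ℝ} {lam : ℝ} (hlam : 1 ≤ lam)
    (hM : M.PosDef) (hlow : (M - G).PosSemidef) (hhigh : (lam • G - M).PosSemidef)
    (e : Fin d → ℝ) :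
    mNorm M (M⁻¹ *ᵥ ((M - G) *ᵥ e)) ≤ (1 - 1 / lam) * mNorm M e := by
  have hl : 0 < lam := by linarith
  have hc : 0 ≤ 1 - 1 / lam := by
    rw [sub_nonneg, div_le_one hl]; exact hlam
  have hle : ∀ u : Fin d → ℝ, u ⬝ᵥ ((M - G) *ᵥ u) ≤ (1 - 1 / lam) * (u ⬝ᵥ (M *ᵥ u)) := by
    intro u
    have h := dotProduct_mulVec_self_nonneg hhigh u
    simp only [Matrix.sub_mulVec, Matrix.smul_mulVec, dotProduct_sub, dotProduct_smul,
      smul_eq_mul] at h ⊢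
    have : 1 / lam * (u ⬝ᵥ (M *ᵥ u)) ≤ u ⬝ᵥ (G *ᵥ u) := by
      rw [one_div_mul_eq_div, div_le_iff₀ hl]; linarith
    linarith
  have hdet : IsUnit M.det := (Matrix.isUnit_iff_isUnit_det _).mp hM.isUnit
  calc _ ≤ √(1 - 1 / lam) * mNorm (M - G) e := by
        refine mNorm_le_of_dotProduct_eq hc hlow hM.posSemidef hle ?_
        rw [Matrix.mulVec_mulVec _ M, Matrix.mul_nonsing_inv _ hdet, Matrix.one_mulVec]
    _ ≤ √(1 - 1 / lam) * (√(1 - 1 / lam) * mNorm M e) := by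
        gcongr; exact mNorm_le_sqrt_mul hc hle e
    _ = _ := by rw [← mul_assoc, Real.mul_self_sqrt hc]

/-- The second term of the error recursion: the effect of an error `E` in the inverse of `M`. -/
lemma mNorm_perturbation_le {d : ℕ} {G M E : Matrix (Fin d) (Fin d) ℝ} {lam ε : ℝ}
    (hlam : 1 ≤ lam) (hε : 0 ≤ ε) (hG : G.PosSemidef)
    (hlow : (M - G).PosSemidef) (hhigh : (lam • G - M).PosSemidef)
    (hE : frobNorm E ≤ ε / ((d : ℝ) * lam * specNorm G)) (e : Fin d → ℝ) :
    mNorm M (E *ᵥ (G *ᵥ e)) ≤ ε * mNorm M e := by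
  have hs : 0 ≤ specNorm G := norm_nonneg _
  have hF : 0 ≤ frobNorm E := Real.sqrt_nonneg _
  have hMe : 0 ≤ mNorm M e := Real.sqrt_nonneg _
  have hMG : ∀ u : Fin d → ℝ, u ⬝ᵥ (M *ᵥ u) ≤ lam * (u ⬝ᵥ (G *ᵥ u)) := fun u => by
    have h := dotProduct_mulVec_self_nonneg hhigh u
    simp only [Matrix.sub_mulVec, Matrix.smul_mulVec, dotProduct_sub, dotProduct_smul,
      smul_eq_mul] at h
    linarith
  have hGM : mNorm G e ≤ mNorm M e := Real.sqrt_le_sqrt <| by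
    have h := dotProduct_mulVec_self_nonneg hlow e
    simp only [Matrix.sub_mulVec, dotProduct_sub] at h
    linarith
  have hGe : mNorm 1 (G *ᵥ e) ≤ √(specNorm G) * mNorm G e :=
    mNorm_le_of_dotProduct_eq hs hG Matrix.PosSemidef.one (dotProduct_mulVec_le_specNorm G)
      (by rw [Matrix.one_mulVec])
  have hsqrt : √lam ≤ lam := Real.sqrt_le_iff.mpr ⟨by linarith, by nlinarith⟩
  -- When `d = 0` or `‖G‖₂ = 0` the quotient bounding `‖E‖_F` is `0`, and the bound still holds.
  have hK : lam * specNorm G * (ε / ((d : ℝ) * lam * specNorm G)) ≤ ε := by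
    rcases Nat.eq_zero_or_pos d with hd | hd
    · simp [hd, hε]
    rcases hs.eq_or_lt with h0 | h0
    · simp [← h0, hε]
    have hd1 : (1 : ℝ) ≤ d := by exact_mod_cast hd
    have hl : 0 < lam := by linarith
    rw [show lam * specNorm G * (ε / ((d : ℝ) * lam * specNorm G)) = ε / d by field_simp]
    exact div_le_self hε hd1
  calc mNorm M (E *ᵥ (G *ᵥ e))
      ≤ √lam * mNorm G (E *ᵥ (G *ᵥ e)) := mNorm_le_sqrt_mul (by linarith) hMG _
    _ ≤ √lam * (√(specNorm G) * mNorm 1 (E *ᵥ (G *ᵥ e))) := by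
        gcongr; exact mNorm_le_sqrt_mul hs (dotProduct_mulVec_le_specNorm G) _
    _ ≤ √lam * (√(specNorm G) * (frobNorm E * mNorm 1 (G *ᵥ e))) := by
        gcongr; exact mNorm_one_mulVec_le _ _
    _ ≤ √lam * (√(specNorm G) * (frobNorm E * (√(specNorm G) * mNorm M e))) := by
        gcongr; exact hGe.trans (by gcongr)
    _ = √lam * (√(specNorm G) * √(specNorm G)) * frobNorm E * mNorm M e := by ring
    _ = √lam * specNorm G * frobNorm E * mNorm M e := by rw [Real.mul_self_sqrt hs]
    _ ≤ lam * specNorm G * (ε / ((d : ℝ) * lam * specNorm G)) * mNorm M e := by gcongr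
    _ ≤ ε * mNorm M e := by gcongr

/-- Error contraction of Richardson's iteration with an approximate preconditioner inverse. -/
theorem richardson_iteration_contraction
    {n d : ℕ} (hnd : d ≤ n)
    (A : Matrix (Fin n) (Fin d) ℝ) (b : Fin n → ℝ)
    (hA : IsUnit (Aᵀ * A).det)
    (lam ε : ℝ) (hlam : 1 ≤ lam) (hε : 0 ≤ ε)
    (M N : Matrix (Fin d) (Fin d) ℝ)
    (hMsymm : M.IsSymm) (hNsymm : N.IsSymm)
    (hlow : (M - Aᵀ * A).PosSemidef)
    (hhigh : (lam • (Aᵀ * A) - M).PosSemidef)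
    (hNM : frobNorm (N - M⁻¹) ≤ ε / ((d : ℝ) * lam * specNorm (Aᵀ * A)))
    (xstar : Fin d → ℝ) (hxstar : xstar = (Aᵀ * A)⁻¹ *ᵥ (Aᵀ *ᵥ b))
    (x : ℕ → Fin d → ℝ)
    (hx : ∀ k, x (k + 1) = x k - N *ᵥ ((Aᵀ * A) *ᵥ x k - Aᵀ *ᵥ b)) :
    ∀ k, mNorm M (x k - xstar) ≤ (1 - 1 / lam + ε) ^ k * mNorm M (x 0 - xstar) := by
  have hG : (Aᵀ * A).PosSemidef := by
    simpa using Matrix.posSemidef_conjTranspose_mul_self A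
  have hnormal : Aᵀ *ᵥ b = (Aᵀ * A) *ᵥ xstar := by
    rw [hxstar, Matrix.mulVec_mulVec _ (Aᵀ * A), Matrix.mul_nonsing_inv _ hA, Matrix.one_mulVec]
  simp only [hnormal] at hx
  generalize Aᵀ * A = G at *
  have hM : M.PosDef := by
    have hGpos : G.PosDef :=
      hG.posDef_iff_isUnit.mpr ((Matrix.isUnit_iff_isUnit_det _).mpr hA)
    simpa using hGpos.add_posSemidef hlow
  have hdet : IsUnit M.det := (Matrix.isUnit_iff_isUnit_det _).mp hM.isUnit
  have hrate : 0 ≤ 1 - 1 / lam + ε := by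
    have : 1 / lam ≤ 1 := (div_le_one (by linarith)).mpr hlam
    linarith
  intro k
  induction k with
  | zero => simp
  | succ k ih =>
    have hstep : x (k + 1) - xstar = M⁻¹ *ᵥ ((M - G) *ᵥ (x k - xstar))
        - (N - M⁻¹) *ᵥ (G *ᵥ (x k - xstar)) := by
      rw [hx k, ← Matrix.mulVec_sub, Matrix.sub_mulVec M G, Matrix.mulVec_sub M⁻¹,
        Matrix.mulVec_mulVec _ M⁻¹ M, Matrix.nonsing_inv_mul _ hdet, Matrix.one_mulVec,
        Matrix.sub_mulVec N]
      abel
    calc mNorm M (x (k + 1) - xstar)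
        ≤ (1 - 1 / lam) * mNorm M (x k - xstar) + ε * mNorm M (x k - xstar) := by
          rw [hstep]
          exact (mNorm_sub_le hM.posSemidef _ _).trans (add_le_add
            (mNorm_exact_step_le hlam hM hlow hhigh _)
            (mNorm_perturbation_le hlam hε hG hlow hhigh hNM _))
      _ = (1 - 1 / lam + ε) * mNorm M (x k - xstar) := by ring
      _ ≤ (1 - 1 / lam + ε) * ((1 - 1 / lam + ε) ^ k * mNorm M (x 0 - xstar)) := by gcongr
      _ = (1 - 1 / lam + ε) ^ (k + 1) * mNorm M (x 0 - xstar) := by ring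
end

section
/- Approximate preconditioned iteration for a weighted projection vector: Let A ∈ ℝ^{n×d} have full column rank, let W ∈ ℝ^{n×n} be a diagonal matrix with positive diagonal entries, let g ∈ ℝⁿ, and set u := √W · A (Aᵀ W A)⁻¹ Aᵀ √W · g. Let λ ≥ 1 and ε ≥ 0, and let M, N ∈ ℝ^{d×d} be symmetric matrices with AᵀWA ⪯ M ⪯ λ·(AᵀWA) and ‖N − M⁻¹‖_F ≤ ε/(d·λ·‖AᵀWA‖₂). Define x⁽⁰⁾ := 0, x⁽ᵏ⁺¹⁾ := x⁽ᵏ⁾ − N·(AᵀWA·x⁽ᵏ⁾ − Aᵀ√W·g), and ũ := √W·A·x⁽ᵏ⁾. Then ‖ũ − u‖₂ ≤ λ·(1 − 1/λ + ε)^k · ‖√W·A(AᵀWA)⁻¹Aᵀ√W·g‖₂. -/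
/-!
Write `B = √W A`, so that `S := AᵀWA = BᵀB`, and let `x⋆ = S⁻¹Aᵀ√W g`; then `u = B x⋆`, and the
error `e = x⁽ᵏ⁾ - x⋆` evolves by `e ↦ (I - NS)e`. In the norm `‖e‖_S = ‖Be‖₂` each step contracts
by the factor `1 - 1/λ + ε`, because `I - NS = (I - M⁻¹S) - (N - M⁻¹)S`, where

* `T := I - M⁻¹S` is self-adjoint for the inner product `⟨a, b⟩_S = aᵀSb`, and `S ⪯ M ⪯ λS` gives
  `0 ≤ ⟨a, Ta⟩_S ≤ (1 - 1/λ)‖a‖_S²`, whence `‖Te‖_S ≤ (1 - 1/λ)‖e‖_S` (`precond_contract`);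
* `‖B(N - M⁻¹)BᵀBe‖₂ ≤ ‖B‖₂² ‖N - M⁻¹‖_F ‖Be‖₂ = ‖S‖₂ ‖N - M⁻¹‖_F ‖Be‖₂ ≤ ε ‖Be‖₂`
  (`perturb_bound`).

Since `‖B(x⁽⁰⁾ - x⋆)‖₂ = ‖u‖₂`, iterating proves the bound even without the leading factor `λ`.
-/


open Matrix

/-- Euclidean norm of a real vector. -/
noncomputable def vecNorm2 {ι : Type*} [Fintype ι] (v : ι → ℝ) : ℝ :=
  Real.sqrt (∑ i, (v i) ^ 2)

open scoped Matrix.Norms.L2Operator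

section Norms

variable {ι κ : Type*} [Fintype ι] [Fintype κ]

lemma vecNorm2_eq_norm (v : ι → ℝ) : vecNorm2 v = ‖WithLp.toLp 2 v‖ := by
  simp [vecNorm2, EuclideanSpace.norm_eq]

lemma vecNorm2_nonneg (v : ι → ℝ) : 0 ≤ vecNorm2 v := Real.sqrt_nonneg _

lemma vecNorm2_sq (v : ι → ℝ) : vecNorm2 v ^ 2 = v ⬝ᵥ v := by
  rw [vecNorm2, Real.sq_sqrt (Finset.sum_nonneg fun i _ => sq_nonneg _)]
  simp [dotProduct, sq]

lemma vecNorm2_sub_le (v w : ι → ℝ) : vecNorm2 (v - w) ≤ vecNorm2 v + vecNorm2 w := by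
  simp only [vecNorm2_eq_norm, WithLp.toLp_sub]
  exact norm_sub_le _ _

lemma vecNorm2_mulVec_le_opNorm [DecidableEq κ] (E : Matrix ι κ ℝ) (v : κ → ℝ) :
    vecNorm2 (E *ᵥ v) ≤ ‖E‖ * vecNorm2 v := by
  simp only [vecNorm2_eq_norm]
  exact Matrix.l2_opNorm_mulVec E (WithLp.toLp 2 v)

lemma vecNorm2_mulVec_le_frobNorm (E : Matrix ι κ ℝ) (v : κ → ℝ) :
    vecNorm2 (E *ᵥ v) ≤ frobNorm E * vecNorm2 v := by
  rw [frobNorm, vecNorm2, vecNorm2, ← Real.sqrt_mul (by positivity)]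
  apply Real.sqrt_le_sqrt
  rw [Finset.sum_mul]
  exact Finset.sum_le_sum fun i _ => Finset.sum_mul_sq_le_sq_mul_sq _ _ _

end Norms

section Contraction

variable {d : ℕ} {S M : Matrix (Fin d) (Fin d) ℝ}

lemma dotProduct_mulVec_comm (hS : S.IsSymm) (a b : Fin d → ℝ) :
    a ⬝ᵥ S *ᵥ b = b ⬝ᵥ S *ᵥ a := by
  rw [dotProduct_mulVec, dotProduct_comm, ← mulVec_transpose, hS.eq]

/-- With `y = M⁻¹Se` and `T = I - M⁻¹S`, this says `0 ≤ ⟨e, Te⟩_S ≤ (1 - 1/λ)‖e‖_S²`. -/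
lemma precond_form_bounds (hS : S.IsSymm) (hM : M.IsSymm) (hS0 : S.PosSemidef)
    {lam : ℝ} (hlam : 1 ≤ lam) (hlow : (M - S).PosSemidef) (hhigh : (lam • S - M).PosSemidef)
    (e y : Fin d → ℝ) (hy : M *ᵥ y = S *ᵥ e) :
    0 ≤ e ⬝ᵥ S *ᵥ (e - y) ∧ e ⬝ᵥ S *ᵥ (e - y) ≤ (1 - 1 / lam) * (e ⬝ᵥ S *ᵥ e) := by
  have hl : 0 < lam := by linarith
  have h1 := hlow.dotProduct_mulVec_nonneg y
  have h2 := hS0.dotProduct_mulVec_nonneg (e - y)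
  have h3 := hhigh.dotProduct_mulVec_nonneg e
  -- The inequality `0 ≤ (e - λy)ᵀM(e - λy)` turns `M ⪯ λS` into `‖e‖_S² ≤ λ⟨e, y⟩_S`.
  have hMpsd : M.PosSemidef := by simpa using hlow.add hS0
  have h4 := hMpsd.dotProduct_mulVec_nonneg (e - lam • y)
  have c1 := dotProduct_mulVec_comm hS y e
  have c2 := dotProduct_mulVec_comm hM y e
  simp only [star_trivial, mulVec_sub, mulVec_smul, sub_mulVec, smul_mulVec, dotProduct_sub,
    sub_dotProduct, smul_dotProduct, dotProduct_smul, smul_eq_mul, hy] at *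
  refine ⟨by linarith, ?_⟩
  have h5 : 0 ≤ lam * (lam * (e ⬝ᵥ S *ᵥ y) - e ⬝ᵥ S *ᵥ e) := by
    rw [c1, ← c2] at h4
    nlinarith
  have h6 := nonneg_of_mul_nonneg_right h5 hl
  have h7 : (e ⬝ᵥ S *ᵥ e) / lam ≤ e ⬝ᵥ S *ᵥ y := by
    rw [div_le_iff₀ hl]; linarith
  have h8 : (1 - 1 / lam) * (e ⬝ᵥ S *ᵥ e) = e ⬝ᵥ S *ᵥ e - (e ⬝ᵥ S *ᵥ e) / lam := by ring
  linarith

/-- The preconditioned step contracts the `S`-norm: with `T = I - M⁻¹S` and `c = 1 - 1/λ`,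
`‖Te‖_S² ≤ c⟨e, Te⟩_S ≤ c²‖e‖_S²`. -/
lemma precond_contract (hS : S.IsSymm) (hM : M.IsSymm) (hS0 : S.PosSemidef)
    {lam : ℝ} (hlam : 1 ≤ lam) (hlow : (M - S).PosSemidef) (hhigh : (lam • S - M).PosSemidef)
    (hdet : IsUnit M.det) (e : Fin d → ℝ) :
    (e - M⁻¹ *ᵥ (S *ᵥ e)) ⬝ᵥ S *ᵥ (e - M⁻¹ *ᵥ (S *ᵥ e)) ≤
      (1 - 1 / lam) ^ 2 * (e ⬝ᵥ S *ᵥ e) := by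
  have hMi (a : Fin d → ℝ) : M *ᵥ (M⁻¹ *ᵥ a) = a := by
    rw [mulVec_mulVec, mul_nonsing_inv _ hdet, one_mulVec]
  have hc : 0 ≤ 1 - 1 / lam := by
    rw [sub_nonneg, div_le_one (by linarith)]; exact hlam
  set c := 1 - 1 / lam with hcdef
  set y := M⁻¹ *ᵥ (S *ᵥ e) with hy
  have hMy : M *ᵥ y = S *ᵥ e := hMi _
  set f := e - y with hf
  set z := M⁻¹ *ᵥ (S *ᵥ f) with hz
  have hMz : M *ᵥ z = S *ᵥ f := hMi _
  have be := precond_form_bounds hS hM hS0 hlam hlow hhigh e y hMy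
  have bf := precond_form_bounds hS hM hS0 hlam hlow hhigh f z hMz
  rw [← hcdef, ← hf] at be
  rw [← hcdef] at bf
  -- Self-adjointness of `T` for `⟨·, ·⟩_S`, in the form `⟨e, Tf⟩_S = ⟨Te, f⟩_S`.
  have hsa : e ⬝ᵥ S *ᵥ (f - z) = f ⬝ᵥ S *ᵥ f := by
    have h1 : e ⬝ᵥ S *ᵥ z = y ⬝ᵥ S *ᵥ f := by
      rw [dotProduct_mulVec_comm hS e z, ← hMy, ← hMz, dotProduct_mulVec_comm hM]
    rw [mulVec_sub, dotProduct_sub, h1, ← sub_dotProduct]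
  have hff : 0 ≤ f ⬝ᵥ S *ᵥ f := by simpa using hS0.dotProduct_mulVec_nonneg f
  -- Positivity of `⟨·, T·⟩_S` at `e - t f`, expanded as a quadratic polynomial in `t`.
  have hquad (t : ℝ) :
      0 ≤ e ⬝ᵥ S *ᵥ f - 2 * t * (f ⬝ᵥ S *ᵥ f) + t ^ 2 * (f ⬝ᵥ S *ᵥ (f - z)) := by
    have h := (precond_form_bounds hS hM hS0 hlam hlow hhigh (e - t • f) (y - t • z) (by
      rw [mulVec_sub, mulVec_sub, mulVec_smul, mulVec_smul, hMy, hMz])).1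
    have hT : e - t • f - (y - t • z) = f - t • (f - z) := by
      rw [hf]; module
    rw [hT] at h
    rw [mulVec_sub, mulVec_smul, dotProduct_sub, sub_dotProduct, sub_dotProduct, dotProduct_smul,
      dotProduct_smul, smul_dotProduct, smul_dotProduct, hsa] at h
    simp only [smul_eq_mul] at h
    linarith
  have hkey : f ⬝ᵥ S *ᵥ f ≤ c * (e ⬝ᵥ S *ᵥ f) := by
    rcases hc.eq_or_lt with h0 | hpos
    · have := hquad 1
      rw [← h0] at be bf ⊢
      linarith
    · have h := hquad (1 / c)
      have h2 : (1 / c) ^ 2 * (f ⬝ᵥ S *ᵥ (f - z)) ≤ (1 / c) ^ 2 * (c * (f ⬝ᵥ S *ᵥ f)) :=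
        mul_le_mul_of_nonneg_left bf.2 (by positivity)
      have h3 : (1 / c) ^ 2 * (c * (f ⬝ᵥ S *ᵥ f)) = (f ⬝ᵥ S *ᵥ f) / c := by field_simp
      have h4 : 2 * (1 / c) * (f ⬝ᵥ S *ᵥ f) = 2 * ((f ⬝ᵥ S *ᵥ f) / c) := by ring
      have h5 : (f ⬝ᵥ S *ᵥ f) / c ≤ e ⬝ᵥ S *ᵥ f := by linarith
      rw [div_le_iff₀ hpos] at h5
      linarith
  calc f ⬝ᵥ S *ᵥ f ≤ c * (e ⬝ᵥ S *ᵥ f) := hkey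
    _ ≤ c * (c * (e ⬝ᵥ S *ᵥ e)) := mul_le_mul_of_nonneg_left be.2 hc
    _ = c ^ 2 * (e ⬝ᵥ S *ᵥ e) := by ring

end Contraction

/-- The error made by applying an inexact inverse, measured in the `BᵀB`-norm. -/
lemma perturb_bound {n d : ℕ} (B : Matrix (Fin n) (Fin d) ℝ) (E : Matrix (Fin d) (Fin d) ℝ)
    {lam ε : ℝ} (hlam : 1 ≤ lam) (hε : 0 ≤ ε)
    (hE : frobNorm E ≤ ε / ((d : ℝ) * lam * specNorm (Bᵀ * B))) (e : Fin d → ℝ) :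
    vecNorm2 (B *ᵥ (E *ᵥ ((Bᵀ * B) *ᵥ e))) ≤ ε * vecNorm2 (B *ᵥ e) := by
  have hσ : specNorm (Bᵀ * B) = ‖B‖ * ‖B‖ := by
    rw [← Matrix.l2_opNorm_conjTranspose_mul_self, conjTranspose_eq_transpose_of_trivial]
    rfl
  have hBt : ‖Bᵀ‖ = ‖B‖ := by
    rw [← conjTranspose_eq_transpose_of_trivial, Matrix.l2_opNorm_conjTranspose]
  rw [hσ] at hE
  have hF : ‖B‖ * ‖B‖ * frobNorm E ≤ ε := by
    rcases (mul_self_nonneg ‖B‖).eq_or_lt with h0 | hpos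
    · rw [← h0]; simpa using hε
    · rcases Nat.eq_zero_or_pos d with hd | hd
      -- For `d = 0` the hypothesis bounds `frobNorm E` by the junk value `ε / 0 = 0`.
      · subst hd
        have : frobNorm E ≤ 0 := by simpa using hE
        nlinarith
      · have hd1 : (1 : ℝ) ≤ d := by exact_mod_cast hd
        have hdl : 1 ≤ (d : ℝ) * lam := by nlinarith
        have : frobNorm E ≤ ε / (‖B‖ * ‖B‖) := by
          refine hE.trans (div_le_div_of_nonneg_left hε hpos ?_)
          nlinarith
        rw [le_div_iff₀ hpos] at this
        linarith
  have hv := vecNorm2_nonneg (B *ᵥ e)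
  have hFE : 0 ≤ frobNorm E := Real.sqrt_nonneg _
  calc vecNorm2 (B *ᵥ (E *ᵥ ((Bᵀ * B) *ᵥ e)))
      ≤ ‖B‖ * vecNorm2 (E *ᵥ ((Bᵀ * B) *ᵥ e)) := vecNorm2_mulVec_le_opNorm B _
    _ ≤ ‖B‖ * (frobNorm E * vecNorm2 (Bᵀ *ᵥ (B *ᵥ e))) := by
        rw [mulVec_mulVec e Bᵀ B]
        gcongr
        exact vecNorm2_mulVec_le_frobNorm _ _
    _ ≤ ‖B‖ * (frobNorm E * (‖Bᵀ‖ * vecNorm2 (B *ᵥ e))) := by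
        gcongr
        exact vecNorm2_mulVec_le_opNorm Bᵀ _
    _ = ‖B‖ * ‖B‖ * frobNorm E * vecNorm2 (B *ᵥ e) := by rw [hBt]; ring
    _ ≤ ε * vecNorm2 (B *ᵥ e) := by gcongr

/-- Approximate preconditioned iteration for a weighted projection vector. -/
theorem weighted_projection_iteration
    {n d : ℕ}
    (A : Matrix (Fin n) (Fin d) ℝ) (g : Fin n → ℝ)
    (hA : IsUnit (Aᵀ * A).det)
    (w : Fin n → ℝ) (hw : ∀ i, 0 < w i)
    (W Wsqrt : Matrix (Fin n) (Fin n) ℝ)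
    (hW : W = Matrix.diagonal w)
    (hWsqrt : Wsqrt = Matrix.diagonal fun i => Real.sqrt (w i))
    (u : Fin n → ℝ) (hu : u = (Wsqrt * A * (Aᵀ * W * A)⁻¹ * Aᵀ * Wsqrt) *ᵥ g)
    (lam ε : ℝ) (hlam : 1 ≤ lam) (hε : 0 ≤ ε)
    (M N : Matrix (Fin d) (Fin d) ℝ)
    (hMsymm : M.IsSymm) (hNsymm : N.IsSymm)
    (hlow : (M - Aᵀ * W * A).PosSemidef)
    (hhigh : (lam • (Aᵀ * W * A) - M).PosSemidef)
    (hNM : frobNorm (N - M⁻¹) ≤ ε / ((d : ℝ) * lam * specNorm (Aᵀ * W * A)))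
    (x : ℕ → Fin d → ℝ) (hx0 : x 0 = 0)
    (hx : ∀ k, x (k + 1) = x k - N *ᵥ ((Aᵀ * W * A) *ᵥ x k - (Aᵀ * Wsqrt) *ᵥ g)) :
    ∀ k, vecNorm2 ((Wsqrt * A) *ᵥ x k - u) ≤
      lam * (1 - 1 / lam + ε) ^ k *
        vecNorm2 ((Wsqrt * A * (Aᵀ * W * A)⁻¹ * Aᵀ * Wsqrt) *ᵥ g) := by
  have hWW : Wsqrt * Wsqrt = W := by
    rw [hWsqrt, hW, diagonal_mul_diagonal]
    congr 1
    ext i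
    exact Real.mul_self_sqrt (hw i).le
  have hWt : Wsqrtᵀ = Wsqrt := by rw [hWsqrt, diagonal_transpose]
  have hSB : Aᵀ * W * A = (Wsqrt * A)ᵀ * (Wsqrt * A) := by
    rw [transpose_mul, hWt, ← hWW]
    simp only [Matrix.mul_assoc]
  have hBt : Aᵀ * Wsqrt = (Wsqrt * A)ᵀ := by rw [transpose_mul, hWt]
  have hinj : Function.Injective (Wsqrt * A).mulVec := by
    have hWdet : IsUnit Wsqrt.det := by
      rw [hWsqrt, det_diagonal]
      exact (Finset.prod_pos fun i _ => Real.sqrt_pos.2 (hw i)).ne'.isUnit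
    intro a b hab
    have h1 : A *ᵥ a = A *ᵥ b := by
      have := congrArg (Wsqrt⁻¹ *ᵥ ·) hab
      simpa [mulVec_mulVec, ← Matrix.mul_assoc, nonsing_inv_mul _ hWdet] using this
    have h2 := congrArg (((Aᵀ * A)⁻¹ * Aᵀ) *ᵥ ·) h1
    simpa [mulVec_mulVec, Matrix.mul_assoc, nonsing_inv_mul _ hA] using h2
  have hassoc : Wsqrt * A * (Aᵀ * W * A)⁻¹ * Aᵀ * Wsqrt
      = Wsqrt * A * ((Aᵀ * W * A)⁻¹ * (Aᵀ * Wsqrt)) := by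
    simp only [Matrix.mul_assoc]
  rw [← hu]
  rw [hassoc] at hu
  rw [hBt] at hu hx
  rw [hSB] at hu hlow hhigh hNM hx
  generalize Wsqrt * A = B at *
  have hSpd : (Bᵀ * B).PosDef := by
    rw [← conjTranspose_eq_transpose_of_trivial]
    exact PosDef.conjTranspose_mul_self B hinj
  have hSsymm : (Bᵀ * B).IsSymm := by simp [IsSymm]
  have hSdet : IsUnit (Bᵀ * B).det := (isUnit_iff_isUnit_det _).1 hSpd.isUnit
  have hMdet : IsUnit M.det := by
    have : M.PosDef := by simpa using hSpd.add_posSemidef hlow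
    exact (isUnit_iff_isUnit_det _).1 this.isUnit
  have hq (e : Fin d → ℝ) : e ⬝ᵥ (Bᵀ * B) *ᵥ e = vecNorm2 (B *ᵥ e) ^ 2 := by
    rw [vecNorm2_sq, ← mulVec_mulVec, dotProduct_mulVec, vecMul_transpose]
  have hc : 0 ≤ 1 - 1 / lam := by
    rw [sub_nonneg, div_le_one (by linarith)]; exact hlam
  have hstep (e : Fin d → ℝ) : vecNorm2 (B *ᵥ (e - N *ᵥ ((Bᵀ * B) *ᵥ e))) ≤
      (1 - 1 / lam + ε) * vecNorm2 (B *ᵥ e) := by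
    have h1 : vecNorm2 (B *ᵥ (e - M⁻¹ *ᵥ ((Bᵀ * B) *ᵥ e))) ≤
        (1 - 1 / lam) * vecNorm2 (B *ᵥ e) := by
      have h := precond_contract hSsymm hMsymm hSpd.posSemidef hlam hlow hhigh hMdet e
      rw [hq, hq, ← mul_pow] at h
      exact le_of_sq_le_sq h (mul_nonneg hc (vecNorm2_nonneg _))
    have h2 := perturb_bound B (N - M⁻¹) hlam hε hNM e
    have h3 : B *ᵥ (e - N *ᵥ ((Bᵀ * B) *ᵥ e)) = B *ᵥ (e - M⁻¹ *ᵥ ((Bᵀ * B) *ᵥ e)) -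
        B *ᵥ ((N - M⁻¹) *ᵥ ((Bᵀ * B) *ᵥ e)) := by
      rw [← mulVec_sub, sub_mulVec]
      congr 1
      abel
    rw [h3]
    linarith [vecNorm2_sub_le (B *ᵥ (e - M⁻¹ *ᵥ ((Bᵀ * B) *ᵥ e)))
      (B *ᵥ ((N - M⁻¹) *ᵥ ((Bᵀ * B) *ᵥ e)))]
  obtain ⟨xs, hxs⟩ : ∃ xs, xs = ((Bᵀ * B)⁻¹ * Bᵀ) *ᵥ g := ⟨_, rfl⟩
  have hus : u = B *ᵥ xs := by rw [hu, hxs, mulVec_mulVec]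
  have hSxs : (Bᵀ * B) *ᵥ xs = Bᵀ *ᵥ g := by
    rw [hxs, mulVec_mulVec, ← Matrix.mul_assoc, mul_nonsing_inv _ hSdet, Matrix.one_mul]
  have main (k : ℕ) : vecNorm2 (B *ᵥ (x k - xs)) ≤ (1 - 1 / lam + ε) ^ k * vecNorm2 u := by
    induction k with
    | zero =>
      have : vecNorm2 (B *ᵥ (x 0 - xs)) = vecNorm2 u := by
        rw [hx0, zero_sub, mulVec_neg, ← hus]
        simp [vecNorm2]
      simp [this]
    | succ k ih =>
      have herr : x (k + 1) - xs = (x k - xs) - N *ᵥ ((Bᵀ * B) *ᵥ (x k - xs)) := by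
        rw [hx, mulVec_sub (Bᵀ * B), hSxs]
        abel
      rw [herr]
      calc _ ≤ (1 - 1 / lam + ε) * vecNorm2 (B *ᵥ (x k - xs)) := hstep _
        _ ≤ (1 - 1 / lam + ε) * ((1 - 1 / lam + ε) ^ k * vecNorm2 u) := by
          gcongr
        _ = _ := by ring
  intro k
  rw [hus, ← mulVec_sub, ← hus, mul_assoc]
  have hnn : 0 ≤ (1 - 1 / lam + ε) ^ k * vecNorm2 u :=
    mul_nonneg (pow_nonneg (by linarith) _) (vecNorm2_nonneg _)
  nlinarith [main k]
end

section
/- Comparison of the Euclidean norm and the projected norm of the weighted least-squares minimizer: Let A ∈ ℝ^{n×d} have full column rank, let b ∈ ℝ^d, let R ≥ 1, let W ∈ ℝ^{n×n} be a diagonal matrix with I ⪯ W ⪯ R·I, and let x* := W⁻¹ A (Aᵀ W⁻¹ A)⁻¹ b be the minimizer of ½‖x‖_W² subject to Aᵀx = b. Then ‖x*‖₂ ≤ R · ‖π_A x*‖₂. -/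
/-!
Put `y = W x*`. The explicit formula for `x*` gives `y = A c` for some `c`, so `y` is fixed by
`π_A`, and symmetry of `π_A` yields `⟨π_A x*, y⟩ = ⟨x*, y⟩ = ∑ wᵢ xᵢ²`. As `1 ≤ wᵢ ≤ R`, the
entrywise bound `wᵢ² xᵢ² ≤ R wᵢ xᵢ²` sums to `‖y‖² ≤ R ⟨π_A x*, y⟩`. Cauchy–Schwarz then gives
`‖y‖ ≤ R ‖π_A x*‖`, and `‖x*‖ ≤ ‖y‖` because `wᵢ ≥ 1`.
-/

open Matrix

/-- Each vector in the column space of `A` has the same inner product with `x` as with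
`π_A x`. -/
lemma dotProduct_proj_mulVec {n d : ℕ} (A : Matrix (Fin n) (Fin d) ℝ)
    (hA : IsUnit (Aᵀ * A).det) (c : Fin d → ℝ) (x : Fin n → ℝ) :
    (A *ᵥ c) ⬝ᵥ ((A * (Aᵀ * A)⁻¹ * Aᵀ) *ᵥ x) = (A *ᵥ c) ⬝ᵥ x := by
  have h : Aᵀ * (A * (Aᵀ * A)⁻¹ * Aᵀ) = Aᵀ := by
    rw [← Matrix.mul_assoc, ← Matrix.mul_assoc, Matrix.mul_nonsing_inv _ hA, Matrix.one_mul]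
  have key (z : Fin n → ℝ) : (A *ᵥ c) ⬝ᵥ z = c ⬝ᵥ (Aᵀ *ᵥ z) := by
    rw [Matrix.dotProduct_mulVec, Matrix.vecMul_transpose]
  rw [key, key, Matrix.mulVec_mulVec, h]

/-- Comparison of the Euclidean norm and the projected norm of the weighted
least-squares minimizer: `‖x*‖₂ ≤ R · ‖π_A x*‖₂`. -/
theorem euclidean_vs_projected_norm_of_minimizer
    {n d : ℕ}
    (A : Matrix (Fin n) (Fin d) ℝ) (b : Fin d → ℝ)
    (hA : IsUnit (Aᵀ * A).det)
    (R : ℝ) (hR : 1 ≤ R)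
    (w : Fin n → ℝ) (W : Matrix (Fin n) (Fin n) ℝ) (hW : W = Matrix.diagonal w)
    (hlow : (W - 1).PosSemidef)
    (hhigh : (R • (1 : Matrix (Fin n) (Fin n) ℝ) - W).PosSemidef)
    (xstar : Fin n → ℝ)
    (hxstar : xstar = (W⁻¹ * A * (Aᵀ * W⁻¹ * A)⁻¹) *ᵥ b) :
    vecNorm2 xstar ≤ R * vecNorm2 ((A * (Aᵀ * A)⁻¹ * Aᵀ) *ᵥ xstar) := by
  have hw1 (i : Fin n) : 1 ≤ w i := by
    have := hlow.diag_nonneg (i := i)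
    simpa [hW] using this
  have hwR (i : Fin n) : w i ≤ R := by
    have := hhigh.diag_nonneg (i := i)
    simpa [hW] using this
  have hWdet : IsUnit W.det := by
    rw [hW, Matrix.det_diagonal, isUnit_iff_ne_zero]
    exact Finset.prod_ne_zero_iff.mpr fun i _ => by linarith [hw1 i]
  set c := (Aᵀ * W⁻¹ * A)⁻¹ *ᵥ b with hc
  have hy : W *ᵥ xstar = A *ᵥ c := by
    rw [hxstar, hc, Matrix.mulVec_mulVec, Matrix.mulVec_mulVec, ← Matrix.mul_assoc,
      ← Matrix.mul_assoc, Matrix.mul_nonsing_inv _ hWdet, Matrix.one_mul]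
  have hproj := dotProduct_proj_mulVec A hA c xstar
  rw [← hy] at hproj
  set p := (A * (Aᵀ * A)⁻¹ * Aᵀ) *ᵥ xstar
  simp only [dotProduct, hW, Matrix.mulVec_diagonal] at hproj
  have hR0 : 0 ≤ R := by linarith
  have hyR : ∑ i, (w i * xstar i) ^ 2 ≤ R * ∑ i, w i * xstar i * xstar i := by
    rw [Finset.mul_sum]
    refine Finset.sum_le_sum fun i _ => ?_
    have h0 : 0 ≤ w i * xstar i ^ 2 := mul_nonneg (by linarith [hw1 i]) (sq_nonneg _)
    nlinarith [mul_le_mul_of_nonneg_right (hwR i) h0]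
  have hxy : ∑ i, xstar i ^ 2 ≤ ∑ i, (w i * xstar i) ^ 2 := by
    refine Finset.sum_le_sum fun i _ => ?_
    rw [mul_pow]
    exact le_mul_of_one_le_left (sq_nonneg _) (one_le_pow₀ (hw1 i))
  -- Cauchy–Schwarz enters in the form `0 ≤ ‖y - R p‖²`.
  have hcs : 0 ≤ ∑ i, (w i * xstar i - R * p i) ^ 2 :=
    Finset.sum_nonneg fun i _ => sq_nonneg _
  have hexp : ∑ i, (w i * xstar i - R * p i) ^ 2 = ∑ i, (w i * xstar i) ^ 2
      - 2 * (R * ∑ i, w i * xstar i * p i) + R ^ 2 * ∑ i, p i ^ 2 := by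
    simp only [Finset.mul_sum]
    rw [← Finset.sum_sub_distrib, ← Finset.sum_add_distrib]
    exact Finset.sum_congr rfl fun i _ => by ring
  rw [hexp, hproj] at hcs
  unfold vecNorm2
  rw [← Real.sqrt_sq hR0, ← Real.sqrt_mul (sq_nonneg R)]
  exact Real.sqrt_le_sqrt (by linarith)
end

section
/- Condition-number bound for a matrix augmented by one column: Let A ∈ ℝ^{n×d} with n > d have full column rank, let g ∈ ℝⁿ, and let κ > 1 satisfy ‖AᵀA‖_F ≤ κ, ‖(AᵀA)⁻¹‖_F ≤ κ, ‖g‖₂ ≤ κ, and ‖(I − A(AᵀA)⁻¹Aᵀ)g‖₂ ≥ 1/κ. Let Ā := [A | g] ∈ ℝ^{n×(d+1)} be the matrix obtained by appending g as a last column to A. Then Āᵀ Ā is invertible, ‖Āᵀ Ā‖_F ≤ 8κ⁷, and ‖(Āᵀ Ā)⁻¹‖_F ≤ 8κ⁷. -/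
/-!
Write `B = AᵀA`, `w = Aᵀg`, `u = B⁻¹w`. The Gram matrix of `[A | g]` is the bordered matrix
`[[B, w], [wᵀ, g ⬝ g]]`, whose Schur complement `S = g ⬝ g - u ⬝ w` is the squared norm of
the residual `(I - A B⁻¹ Aᵀ) g = g - A u`; hence `S ≥ 1/κ²`. Its inverse is therefore
`diag(B⁻¹, 0) + v vᵀ / S` with `v = (u, -1)` (`bordered_mul_inverse`).

The bounds are free of dimension factors because `w` and `u` are estimated by quadratic forms
instead of by the Frobenius norm of `A`. First, `‖w‖² = g ⬝ A w` and `‖A w‖² = w ⬝ B w ≤ κ‖w‖²`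
give `‖w‖² ≤ κ³`. Likewise, with `z = B⁻¹u`, `‖u‖² = g ⬝ A z` and `‖A z‖² = u ⬝ B⁻¹u ≤ κ‖u‖²`
give `‖u‖² ≤ κ³`. Consequently the squared Frobenius norms are at most `κ² + 2κ³ + κ⁴` for the
Gram matrix, and `2κ² + 2κ⁴(κ³ + 1)²` for its inverse.
-/

open Matrix

lemma dotProduct_sq_le {ι : Type*} [Fintype ι] (x y : ι → ℝ) :
    (x ⬝ᵥ y) ^ 2 ≤ (x ⬝ᵥ x) * (y ⬝ᵥ y) := by
  have h := Finset.sum_mul_sq_le_sq_mul_sq Finset.univ x y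
  simpa only [dotProduct, ← sq] using h

lemma dotProduct_self_nonneg_real {ι : Type*} [Fintype ι] (x : ι → ℝ) : 0 ≤ x ⬝ᵥ x :=
  Finset.sum_nonneg fun i _ => mul_self_nonneg (x i)

lemma mulVec_dotProduct_self_le {m n : Type*} [Fintype m] [Fintype n]
    (M : Matrix m n ℝ) (x : n → ℝ) :
    (M *ᵥ x) ⬝ᵥ (M *ᵥ x) ≤ (∑ i, ∑ j, (M i j) ^ 2) * (x ⬝ᵥ x) := by
  rw [Finset.sum_mul]
  refine Finset.sum_le_sum fun i _ => ?_
  have h := dotProduct_sq_le (M i) x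
  have e : M i ⬝ᵥ M i = ∑ j, (M i j) ^ 2 := by simp only [dotProduct, ← sq]
  rw [e, sq] at h
  exact h

lemma quadForm_le {n : Type*} [Fintype n] (M : Matrix n n ℝ) (c : ℝ) (hc : 0 ≤ c)
    (hM : ∑ i, ∑ j, (M i j) ^ 2 ≤ c ^ 2) (x : n → ℝ) :
    x ⬝ᵥ (M *ᵥ x) ≤ c * (x ⬝ᵥ x) := by
  have hx := dotProduct_self_nonneg_real x
  refine abs_le_of_sq_le_sq' ?_ (mul_nonneg hc hx) |>.2
  calc (x ⬝ᵥ (M *ᵥ x)) ^ 2 ≤ (x ⬝ᵥ x) * ((M *ᵥ x) ⬝ᵥ (M *ᵥ x)) := dotProduct_sq_le _ _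
    _ ≤ (x ⬝ᵥ x) * (c ^ 2 * (x ⬝ᵥ x)) := by
        gcongr
        exact (mulVec_dotProduct_self_le M x).trans (by gcongr)
    _ = (c * (x ⬝ᵥ x)) ^ 2 := by ring

/-- If `‖x‖² = g ⬝ y` with `‖g‖ ≤ κ` and `‖y‖² ≤ κ‖x‖²`, then `‖x‖² ≤ κ³`. Applied with
`(x, y) = (w, A w)` and `(x, y) = (u, A B⁻¹ u)`. -/
lemma dotProduct_self_le_cube {m n : Type*} [Fintype m] [Fintype n] {κ : ℝ} (hκ : 0 < κ)
    (x : m → ℝ) (g y : n → ℝ) (hxy : x ⬝ᵥ x = g ⬝ᵥ y) (hg : g ⬝ᵥ g ≤ κ ^ 2)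
    (hy : y ⬝ᵥ y ≤ κ * (x ⬝ᵥ x)) : x ⬝ᵥ x ≤ κ ^ 3 := by
  have hx := dotProduct_self_nonneg_real x
  have h : (x ⬝ᵥ x) * (x ⬝ᵥ x) ≤ κ ^ 3 * (x ⬝ᵥ x) := by
    calc (x ⬝ᵥ x) * (x ⬝ᵥ x) = (g ⬝ᵥ y) ^ 2 := by rw [← hxy]; ring
      _ ≤ (g ⬝ᵥ g) * (y ⬝ᵥ y) := dotProduct_sq_le _ _
      _ ≤ κ ^ 2 * (κ * (x ⬝ᵥ x)) :=
          mul_le_mul hg hy (dotProduct_self_nonneg_real y) (by positivity)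
      _ = κ ^ 3 * (x ⬝ᵥ x) := by ring
  rcases hx.eq_or_lt with h0 | h0
  · rw [← h0]; positivity
  · exact le_of_mul_le_mul_right h h0

/-- The symmetric bordered matrix `[[B, w], [wᵀ, s]]`, with the border placed last. -/
def bordered {d : ℕ} (B : Matrix (Fin d) (Fin d) ℝ) (w : Fin d → ℝ) (s : ℝ) :
    Matrix (Fin (d + 1)) (Fin (d + 1)) ℝ :=
  Matrix.of (Fin.snoc (fun i => Fin.snoc (B i) (w i) : Fin d → Fin (d + 1) → ℝ) (Fin.snoc w s))

section bordered
variable {d : ℕ} (B : Matrix (Fin d) (Fin d) ℝ) (w : Fin d → ℝ) (s : ℝ)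

@[simp] lemma bordered_cc (i j : Fin d) :
    bordered B w s i.castSucc j.castSucc = B i j := by simp [bordered]
@[simp] lemma bordered_cl (i : Fin d) :
    bordered B w s i.castSucc (Fin.last d) = w i := by simp [bordered]
@[simp] lemma bordered_lc (j : Fin d) :
    bordered B w s (Fin.last d) j.castSucc = w j := by simp [bordered]
@[simp] lemma bordered_ll :
    bordered B w s (Fin.last d) (Fin.last d) = s := by simp [bordered]

lemma sum_sq_bordered :
    ∑ i, ∑ j, (bordered B w s i j) ^ 2 =
      ∑ i, ∑ j, (B i j) ^ 2 + 2 * (w ⬝ᵥ w) + s ^ 2 := by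
  simp only [Fin.sum_univ_castSucc, bordered_cc, bordered_cl, bordered_lc, bordered_ll,
    Finset.sum_add_distrib, dotProduct, ← sq]
  ring

/-- Block inversion by the Schur complement `S = s - u ⬝ w`, where `B C = 1`, `B u = w` and
`wᵀ C = uᵀ`: the inverse `diag(C, 0) + v vᵀ / S` with `v = (u, -1)`, written in bordered form. -/
lemma bordered_mul_inverse (C : Matrix (Fin d) (Fin d) ℝ) (u : Fin d → ℝ)
    (hBC : B * C = 1) (hu : B *ᵥ u = w) (hC : Matrix.vecMul w C = u)
    (S : ℝ) (hS : S = s - u ⬝ᵥ w) (hS0 : S ≠ 0) :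
    bordered B w s * bordered (Matrix.of fun i j => C i j + u i * u j / S)
      (fun i => - u i / S) (1 / S) = 1 := by
  have e1 : ∀ i j, ∑ k, B i k * C k j = (1 : Matrix (Fin d) (Fin d) ℝ) i j := fun i j => by
    rw [← hBC, Matrix.mul_apply]
  have e2 : ∀ i, ∑ k, B i k * u k = w i := fun i => congrFun hu i
  have e3 : ∀ j, ∑ k, w k * C k j = u j := fun j => congrFun hC j
  have e4 : ∑ k, w k * u k = s - S := by
    rw [hS, dotProduct_comm]; simp [dotProduct]
  have e5 : ∀ (x : Fin d → ℝ) (c : ℝ), ∑ k, x k * (u k * c / S) = (∑ k, x k * u k) * (c / S) :=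
    fun x c => by rw [Finset.sum_mul]; exact Finset.sum_congr rfl fun k _ => by ring
  have e6 : ∀ (x : Fin d → ℝ), ∑ k, x k * (- u k / S) = (∑ k, x k * u k) * (- 1 / S) :=
    fun x => by rw [Finset.sum_mul]; exact Finset.sum_congr rfl fun k _ => by ring
  ext i j
  rw [Matrix.mul_apply, Fin.sum_univ_castSucc]
  refine Fin.lastCases ?_ (fun i => ?_) i <;> refine Fin.lastCases ?_ (fun j => ?_) j
  · simp only [bordered_lc, bordered_cl, bordered_ll, e6, e4, Matrix.one_apply_eq]
    field_simp
    ring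
  · simp only [bordered_lc, bordered_cc, bordered_ll, Matrix.of_apply, mul_add,
      Finset.sum_add_distrib, e5, e3, e4]
    rw [Matrix.one_apply_ne (Fin.castSucc_lt_last j).ne']
    field_simp
    ring
  · simp only [bordered_cl, bordered_cc, bordered_ll, e6, e2]
    rw [Matrix.one_apply_ne (Fin.castSucc_lt_last i).ne]
    ring
  · simp only [bordered_cl, bordered_cc, bordered_lc, Matrix.of_apply, mul_add,
      Finset.sum_add_distrib, e5, e1, e2, Matrix.one_apply, Fin.castSucc_inj]
    ring

lemma sum_sq_inverse_le (C : Matrix (Fin d) (Fin d) ℝ) (u : Fin d → ℝ) (S : ℝ) :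
    ∑ i, ∑ j, (bordered (Matrix.of fun i j => C i j + u i * u j / S)
      (fun i => - u i / S) (1 / S) i j) ^ 2 ≤
      2 * ∑ i, ∑ j, (C i j) ^ 2 + 2 * (u ⬝ᵥ u + 1) ^ 2 * (1 / S) ^ 2 := by
  have h : ∑ i, ∑ j, (C i j + u i * u j / S) ^ 2 ≤
      2 * ∑ i, ∑ j, (C i j) ^ 2 + 2 * (u ⬝ᵥ u) ^ 2 * (1 / S) ^ 2 := by
    have e : (u ⬝ᵥ u) ^ 2 = ∑ i, ∑ j, (u i * u j) ^ 2 := by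
      rw [sq, dotProduct, Finset.sum_mul_sum]
      exact Finset.sum_congr rfl fun i _ => Finset.sum_congr rfl fun j _ => by ring
    rw [e]
    simp only [Finset.mul_sum, Finset.sum_mul, ← Finset.sum_add_distrib]
    refine Finset.sum_le_sum fun i _ => Finset.sum_le_sum fun j _ => ?_
    have := sq_nonneg (C i j - u i * u j / S)
    have e' : 2 * (u i * u j) ^ 2 * (1 / S) ^ 2 = 2 * (u i * u j / S) ^ 2 := by ring
    rw [e']
    linarith [this, add_sq (C i j) (u i * u j / S), sub_sq (C i j) (u i * u j / S)]
  rw [sum_sq_bordered]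
  simp only [Matrix.of_apply]
  have e : (fun i => - u i / S) ⬝ᵥ (fun i => - u i / S) = (u ⬝ᵥ u) * (1 / S) ^ 2 := by
    rw [dotProduct, dotProduct, Finset.sum_mul]
    exact Finset.sum_congr rfl fun i _ => by ring
  rw [e]
  have hu := mul_nonneg (dotProduct_self_nonneg_real u) (sq_nonneg (1 / S))
  nlinarith [sq_nonneg (1 / S)]

end bordered

lemma dotProduct_self_eq_sum_sq {ι : Type*} [Fintype ι] (x : ι → ℝ) :
    x ⬝ᵥ x = ∑ i, x i ^ 2 := by simp only [dotProduct, ← sq]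

lemma gram_snoc {n d : ℕ} (A : Matrix (Fin n) (Fin d) ℝ) (g : Fin n → ℝ) :
    (Matrix.of fun i => (Fin.snoc (A i) (g i) : Fin (d + 1) → ℝ))ᵀ *
      (Matrix.of fun i => (Fin.snoc (A i) (g i) : Fin (d + 1) → ℝ)) =
      bordered (Aᵀ * A) (Aᵀ *ᵥ g) (g ⬝ᵥ g) := by
  ext i j
  refine Fin.lastCases ?_ (fun i => ?_) i <;> refine Fin.lastCases ?_ (fun j => ?_) j <;>
    simp [Matrix.mul_apply, Matrix.mulVec, dotProduct, mul_comm]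

/-- Condition-number bound for a matrix augmented by one column. -/
theorem augmented_matrix_condition_number
    {n d : ℕ} (hnd : d < n)
    (A : Matrix (Fin n) (Fin d) ℝ) (g : Fin n → ℝ)
    (hA : IsUnit (Aᵀ * A).det)
    (κ : ℝ) (hκ : 1 < κ)
    (h1 : frobNorm (Aᵀ * A) ≤ κ)
    (h2 : frobNorm ((Aᵀ * A)⁻¹) ≤ κ)
    (h3 : vecNorm2 g ≤ κ)
    (h4 : 1 / κ ≤ vecNorm2 (((1 : Matrix (Fin n) (Fin n) ℝ) - A * (Aᵀ * A)⁻¹ * Aᵀ) *ᵥ g))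
    (Abar : Matrix (Fin n) (Fin (d + 1)) ℝ)
    (hAbar : Abar = Matrix.of fun i => Fin.snoc (A i) (g i)) :
    IsUnit (Abarᵀ * Abar).det ∧
    frobNorm (Abarᵀ * Abar) ≤ 8 * κ ^ 7 ∧
    frobNorm ((Abarᵀ * Abar)⁻¹) ≤ 8 * κ ^ 7 := by
  have hκ0 : 0 < κ := by linarith
  have hG : Abarᵀ * Abar = bordered (Aᵀ * A) (Aᵀ *ᵥ g) (g ⬝ᵥ g) := by
    rw [hAbar]; exact gram_snoc A g
  rw [hG]
  have hBs : (Aᵀ * A)ᵀ = Aᵀ * A := by simp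
  have hform : ∀ x : Fin d → ℝ, (A *ᵥ x) ⬝ᵥ (A *ᵥ x) = x ⬝ᵥ ((Aᵀ * A) *ᵥ x) := fun x => by
    rw [← Matrix.mulVec_mulVec, Matrix.dotProduct_mulVec x, Matrix.vecMul_transpose]
  have hadj : ∀ x : Fin d → ℝ, x ⬝ᵥ (Aᵀ *ᵥ g) = g ⬝ᵥ (A *ᵥ x) := fun x => by
    rw [Matrix.dotProduct_mulVec, Matrix.vecMul_transpose, dotProduct_comm]
  set B := Aᵀ * A with hB
  set w := Aᵀ *ᵥ g with hw
  set C := B⁻¹ with hCdef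
  set u := C *ᵥ w with hu
  have hBC : B * C = 1 := Matrix.mul_nonsing_inv _ hA
  have hCs : Cᵀ = C := by rw [hCdef, Matrix.transpose_nonsing_inv, hBs]
  have hvC : ∀ x : Fin d → ℝ, Matrix.vecMul x C = C *ᵥ x := fun x => by
    conv_lhs => rw [← hCs]
    rw [Matrix.vecMul_transpose]
  have hBu : ∀ x : Fin d → ℝ, B *ᵥ (C *ᵥ x) = x := fun x => by
    rw [Matrix.mulVec_mulVec, hBC, Matrix.one_mulVec]
  have h1' : ∑ i, ∑ j, (B i j) ^ 2 ≤ κ ^ 2 := (Real.sqrt_le_left hκ0.le).1 h1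
  have h2' : ∑ i, ∑ j, (C i j) ^ 2 ≤ κ ^ 2 := (Real.sqrt_le_left hκ0.le).1 h2
  have h3' : g ⬝ᵥ g ≤ κ ^ 2 := by
    rw [dotProduct_self_eq_sum_sq]; exact (Real.sqrt_le_left hκ0.le).1 h3
  have hw3 : w ⬝ᵥ w ≤ κ ^ 3 := by
    refine dotProduct_self_le_cube hκ0 w g (A *ᵥ w) (hadj w) h3' ?_
    rw [hform]
    exact quadForm_le B κ hκ0.le h1' w
  have hu3 : u ⬝ᵥ u ≤ κ ^ 3 := by
    refine dotProduct_self_le_cube hκ0 u g (A *ᵥ (C *ᵥ u)) ?_ h3' ?_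
    · rw [← hadj, ← hvC u, ← Matrix.dotProduct_mulVec]
    · rw [hform, hBu, dotProduct_comm]
      exact quadForm_le C κ hκ0.le h2' u
  -- The Schur complement is the squared norm of the residual `g - A u`.
  have hS : (1 / κ) ^ 2 ≤ g ⬝ᵥ g - u ⬝ᵥ w := by
    have e : ((1 : Matrix (Fin n) (Fin n) ℝ) - A * C * Aᵀ) *ᵥ g = g - A *ᵥ u := by
      rw [Matrix.sub_mulVec, Matrix.one_mulVec, ← Matrix.mulVec_mulVec, ← Matrix.mulVec_mulVec]
    rw [e] at h4
    have h := (Real.le_sqrt' (by positivity)).1 h4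
    rw [← dotProduct_self_eq_sum_sq, sub_dotProduct, dotProduct_sub, dotProduct_sub, hform,
      hBu, dotProduct_comm (A *ᵥ u) g, ← hadj] at h
    linarith
  obtain ⟨S, hSdef⟩ : ∃ S, S = g ⬝ᵥ g - u ⬝ᵥ w := ⟨_, rfl⟩
  rw [← hSdef] at hS
  have hS0 : 0 < S := lt_of_lt_of_le (by positivity) hS
  have hSinv : 1 / S ≤ κ ^ 2 := by
    rw [div_le_iff₀ hS0]
    calc (1 : ℝ) = κ ^ 2 * (1 / κ) ^ 2 := by field_simp
      _ ≤ κ ^ 2 * S := by gcongr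
  have hinv := bordered_mul_inverse B w (g ⬝ᵥ g) C u hBC (hBu w) (hvC w) S hSdef hS0.ne'
  refine ⟨Matrix.isUnit_det_of_right_inverse hinv, ?_, ?_⟩
  · refine Real.sqrt_le_left (by positivity) |>.2 ?_
    rw [sum_sq_bordered]
    have hg2 : (g ⬝ᵥ g) ^ 2 ≤ (κ ^ 2) ^ 2 :=
      pow_le_pow_left₀ (dotProduct_self_nonneg_real g) h3' 2
    have p2 : κ ^ 2 ≤ κ ^ 14 := pow_le_pow_right₀ hκ.le (by norm_num)
    have p3 : κ ^ 3 ≤ κ ^ 14 := pow_le_pow_right₀ hκ.le (by norm_num)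
    have p4 : κ ^ 4 ≤ κ ^ 14 := pow_le_pow_right₀ hκ.le (by norm_num)
    have p0 : 0 < κ ^ 14 := by positivity
    calc _ ≤ κ ^ 2 + 2 * κ ^ 3 + (κ ^ 2) ^ 2 := by gcongr
      _ = κ ^ 2 + 2 * κ ^ 3 + κ ^ 4 := by ring
      _ ≤ 64 * κ ^ 14 := by linarith
      _ = (8 * κ ^ 7) ^ 2 := by ring
  · rw [Matrix.inv_eq_right_inv hinv]
    refine Real.sqrt_le_left (by positivity) |>.2 ?_
    have hu0 := dotProduct_self_nonneg_real u
    have p2 : κ ^ 2 ≤ κ ^ 14 := pow_le_pow_right₀ hκ.le (by norm_num)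
    have p10 : κ ^ 10 ≤ κ ^ 14 := pow_le_pow_right₀ hκ.le (by norm_num)
    have p0 : 0 < κ ^ 14 := by positivity
    have p3 : 1 ≤ κ ^ 3 := one_le_pow₀ hκ.le
    calc _ ≤ 2 * ∑ i, ∑ j, (C i j) ^ 2 + 2 * (u ⬝ᵥ u + 1) ^ 2 * (1 / S) ^ 2 :=
          sum_sq_inverse_le C u S
      _ ≤ 2 * κ ^ 2 + 2 * (κ ^ 3 + κ ^ 3) ^ 2 * (κ ^ 2) ^ 2 := by gcongr
      _ = 2 * κ ^ 2 + 8 * κ ^ 10 := by ring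
      _ ≤ 64 * κ ^ 14 := by linarith
      _ = (8 * κ ^ 7) ^ 2 := by ring
end

section
/- Progress of one step of iterative refinement for p-norm minimization: Let p > 1, α > 1, A ∈ ℝ^{n×d}, b ∈ ℝ^d, and x ∈ ℝⁿ with Aᵀx = b. Define g ∈ ℝⁿ by gᵢ := p·|xᵢ|^{p−2}·xᵢ (with gᵢ := 0 when xᵢ = 0) and the residual objective f(Δ) := gᵀΔ − ((p−1)/(p·2^p))·γ_p(|x|, Δ) for Δ ∈ ℝⁿ. Let opt := min{‖y‖_p^p : Aᵀy = b}, assumed attained. Suppose Δ̂ ∈ ℝⁿ is an α-approximate solution of the residual problem, i.e., f(Δ̂) ≥ (1/α)·f(Δ) for every Δ ∈ ℝⁿ with AᵀΔ = 0. Then, with λ := ((p−1)/(p·4^p))^{1/min{1, p−1}}, one has ‖x − λ·Δ̂‖_p^p − opt ≤ (1 − λ/α)·(‖x‖_p^p − opt). -/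
/-!
The function `γ_p(|y|, ·)` is, up to constant factors, the second-order (Bregman) remainder of
`|·|^p` at `y`: with `c = (p - 1) / (p 2 ^ p)`,
`c γ_p(|y|, D) ≤ |y - D|^p - |y|^p + g D ≤ 2 ^ p γ_p(|y|, D)`  (`bregman_bounds`).
By homogeneity only `y = 1` matters (and `y = 0`, where `γ_p(0, D) = |D|^p`). There all the
functions vanish at `D = 0`, so it suffices to compare derivatives, separately for `D` of either
sign and for `|D|` below and above `1`; these comparisons follow from Bernoulli's inequality and
convexity or concavity of `t ↦ t ^ (p - 1)`.

Summed over coordinates and applied to `D = x - xopt`, the lower bound says that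
`f (x - xopt) ≥ ‖x‖_p^p - opt`, hence `f Δhat ≥ (‖x‖_p^p - opt) / α`. For the step `lam • Δhat`, the
upper bound together with `γ_p(t, lam D) ≤ lam ^ min(2, p) γ_p(t, D)` (`gammaP_scale`) and
`2 ^ p * lam ^ min(1, p - 1) = c` gives `‖x - lam • Δhat‖_p^p ≤ ‖x‖_p^p - lam f Δhat`.
-/

open Matrix

/-- The `p`-th power of the `p`-norm of a vector: `‖v‖_p^p = Σᵢ |vᵢ|^p`. -/
noncomputable def pnormP {ι : Type*} [Fintype ι] (p : ℝ) (v : ι → ℝ) : ℝ :=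
  ∑ i, |v i| ^ p

/-- The (quadratically) smoothed `p`-norm function `γ_p(t, x)`. -/
noncomputable def gammaP (p t x : ℝ) : ℝ :=
  if |x| ≤ t then p / 2 * t ^ (p - 2) * x ^ 2 else |x| ^ p + (p / 2 - 1) * t ^ p

/-- `γ_p(t, Δ) = Σᵢ γ_p(tᵢ, Δᵢ)` for vectors. -/
noncomputable def gammaVec {ι : Type*} [Fintype ι] (p : ℝ) (t Δ : ι → ℝ) : ℝ :=
  ∑ i, gammaP p (t i) (Δ i)

/-! ### Comparison of functions through their derivatives -/

/-- Two differentiable functions on `[a, b]` whose derivatives are ordered stay in the order they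
have at `a`. -/
lemma le_of_hasDerivAt_le {F F' G G' : ℝ → ℝ} {a b : ℝ} (hab : a ≤ b)
    (hF : ∀ x ∈ Set.Icc a b, HasDerivAt F (F' x) x)
    (hG : ∀ x ∈ Set.Icc a b, HasDerivAt G (G' x) x)
    (ha : F a ≤ G a) (h : ∀ x ∈ Set.Icc a b, F' x ≤ G' x) : F b ≤ G b :=
  image_le_of_deriv_right_le_deriv_boundary
    (fun x hx => (hF x hx).continuousAt.continuousWithinAt)
    (fun x hx => (hF x (Set.Ico_subset_Icc_self hx)).hasDerivWithinAt) ha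
    (fun x hx => (hG x hx).continuousAt.continuousWithinAt)
    (fun x hx => (hG x (Set.Ico_subset_Icc_self hx)).hasDerivWithinAt)
    (fun x hx => h x (Set.Ico_subset_Icc_self hx)) (Set.right_mem_Icc.2 hab)

/-- Integrated form of the derivative bounds: if the derivative of a function `F` (equal to `F₁` on
`[0, 1]` and to `F₂` on `[1, ∞)`) lies between `k` and `K` times that of `γ_p(1, ·)`, which is
`p x` on `[0, 1]` and `p x ^ (p - 1)` beyond, then `k γ_p(1, ·) ≤ F ≤ K γ_p(1, ·)`. -/
lemma bounds_of_deriv_bounds {p k K : ℝ} (hp : 1 < p) {F₁ D₁ F₂ D₂ : ℝ → ℝ}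
    (h1 : ∀ x, 0 ≤ x → x ≤ 1 → HasDerivAt F₁ (p * D₁ x) x)
    (h2 : ∀ x, 1 ≤ x → HasDerivAt F₂ (p * D₂ x) x)
    (h0 : F₁ 0 = 0) (h01 : F₁ 1 = F₂ 1)
    (b1 : ∀ x, 0 ≤ x → x ≤ 1 → k * x ≤ D₁ x ∧ D₁ x ≤ K * x)
    (b2 : ∀ x, 1 ≤ x → k * x ^ (p - 1) ≤ D₂ x ∧ D₂ x ≤ K * x ^ (p - 1)) :
    (∀ x, 0 ≤ x → x ≤ 1 → k * (p / 2 * x ^ 2) ≤ F₁ x ∧ F₁ x ≤ K * (p / 2 * x ^ 2)) ∧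
    (∀ x, 1 ≤ x → k * (x ^ p + (p / 2 - 1)) ≤ F₂ x ∧ F₂ x ≤ K * (x ^ p + (p / 2 - 1))) := by
  have g1 : ∀ c x : ℝ, HasDerivAt (fun y : ℝ => c * (p / 2 * y ^ 2)) (p * (c * x)) x := by
    intro c x
    have := (((hasDerivAt_id x).pow 2).const_mul (p / 2)).const_mul c
    exact this.congr_deriv (by simp only [id_eq]; push_cast; ring)
  have g2 : ∀ c x : ℝ, HasDerivAt (fun y : ℝ => c * (y ^ p + (p / 2 - 1)))
      (p * (c * x ^ (p - 1))) x := by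
    intro c x
    have := ((Real.hasDerivAt_rpow_const (x := x) (p := p) (Or.inr hp.le)).add_const
      (p / 2 - 1)).const_mul c
    exact this.congr_deriv (by ring)
  have hp0 : 0 < p := by linarith
  have A : ∀ x, 0 ≤ x → x ≤ 1 → k * (p / 2 * x ^ 2) ≤ F₁ x ∧ F₁ x ≤ K * (p / 2 * x ^ 2) := by
    intro x hx0 hx1
    constructor
    · refine le_of_hasDerivAt_le hx0 (fun y _ => g1 k y)
        (fun y hy => h1 y hy.1 (hy.2.trans hx1)) (by simp [h0]) fun y hy => ?_
      exact mul_le_mul_of_nonneg_left (b1 y hy.1 (hy.2.trans hx1)).1 hp0.le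
    · refine le_of_hasDerivAt_le hx0 (fun y hy => h1 y hy.1 (hy.2.trans hx1))
        (fun y _ => g1 K y) (by simp [h0]) fun y hy => ?_
      exact mul_le_mul_of_nonneg_left (b1 y hy.1 (hy.2.trans hx1)).2 hp0.le
  refine ⟨A, fun x hx => ?_⟩
  have e1 := A 1 zero_le_one le_rfl
  rw [h01] at e1
  constructor
  · refine le_of_hasDerivAt_le hx (fun y _ => g2 k y) (fun y hy => h2 y hy.1) ?_ fun y hy => ?_
    · rw [Real.one_rpow]; linarith [e1.1]
    · exact mul_le_mul_of_nonneg_left (b2 y hy.1).1 hp0.le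
  · refine le_of_hasDerivAt_le hx (fun y hy => h2 y hy.1) (fun y _ => g2 K y) ?_ fun y hy => ?_
    · rw [Real.one_rpow]; linarith [e1.2]
    · exact mul_le_mul_of_nonneg_left (b2 y hy.1).2 hp0.le

/-! ### Derivative bounds at base point one -/

lemma refineConst_bounds {p c : ℝ} (hp : 1 < p) (hc : c = (p - 1) / (p * (2 : ℝ) ^ p)) :
    0 < c ∧ c ≤ (p - 1) / 2 ∧ c * 2 ^ p ≤ 1 ∧ c ≤ 1 / 2 := by
  have h2 : (2 : ℝ) ≤ 2 ^ p := by
    simpa using Real.rpow_le_rpow_of_exponent_le (by norm_num : (1 : ℝ) ≤ 2) hp.le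
  have hpos : 0 < p * (2 : ℝ) ^ p := by positivity
  have hc2 : c * 2 ^ p = (p - 1) / p := by rw [hc]; field_simp
  have hc1 : c * 2 ^ p ≤ 1 := by rw [hc2, div_le_one (by linarith)]; linarith
  have hc0 : 0 < c := by rw [hc]; exact div_pos (by linarith) hpos
  refine ⟨hc0, ?_, hc1, by nlinarith⟩
  rw [hc]
  exact div_le_div_of_nonneg_left (by linarith) (by norm_num) (by nlinarith)

/-- For `0 ≤ q ≤ 1`, Bernoulli's inequality for `(1 - 1/2) ^ q` gives `2 ^ q (1 - q / 2) ≥ 1`. -/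
lemma one_le_two_rpow_mul {q : ℝ} (h0 : 0 ≤ q) (h1 : q ≤ 1) : 1 ≤ (2 : ℝ) ^ q * (1 - q / 2) := by
  have h := rpow_one_add_le_one_add_mul_self (by norm_num : (-1 : ℝ) ≤ -(1 / 2)) h0 h1
  have h3 : (2 : ℝ) ^ q * (1 + -(1 / 2)) ^ q = 1 := by
    rw [← Real.mul_rpow (by norm_num) (by norm_num)]; norm_num
  have : 0 < (2 : ℝ) ^ q := by positivity
  nlinarith

lemma deriv_bounds_add_small {p c : ℝ} (hp : 1 < p) (hc : c = (p - 1) / (p * (2 : ℝ) ^ p))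
    {x : ℝ} (h0 : 0 ≤ x) (h1 : x ≤ 1) :
    c * x ≤ (1 + x) ^ (p - 1) - 1 ∧ (1 + x) ^ (p - 1) - 1 ≤ 2 ^ p * x := by
  obtain ⟨hc0, hcq, -, hc2⟩ := refineConst_bounds hp hc
  have e2 : (2 : ℝ) ^ p = 2 * 2 ^ (p - 1) := by
    rw [Real.rpow_sub_one (by norm_num)]; ring
  have hpos : 0 < (2 : ℝ) ^ (p - 1) := by positivity
  have hx' : (1 - x) + 2 * x = 1 + x := by ring
  rcases le_total 1 (p - 1) with hq | hq
  · have hB := one_add_mul_self_le_rpow_one_add (by linarith : (-1 : ℝ) ≤ x) hq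
    have hC := (convexOn_rpow hq).2 (x := 1) (y := 2) (by simp) (by simp)
      (by linarith : 0 ≤ 1 - x) h0 (by ring)
    simp only [smul_eq_mul, mul_one, Real.one_rpow] at hC
    rw [mul_comm x 2, hx'] at hC
    constructor <;> nlinarith
  · have hB := rpow_one_add_le_one_add_mul_self (by linarith : (-1 : ℝ) ≤ x) (by linarith) hq
    have hC := (Real.concaveOn_rpow (by linarith) hq).2 (x := 1) (y := 2) (by simp) (by simp)
      (by linarith : 0 ≤ 1 - x) h0 (by ring)
    simp only [smul_eq_mul, mul_one, Real.one_rpow] at hC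
    rw [mul_comm x 2, hx'] at hC
    have h2 := one_le_two_rpow_mul (by linarith : 0 ≤ p - 1) hq
    have h3 : (1 : ℝ) ≤ 2 ^ (p - 1) := Real.one_le_rpow (by norm_num) (by linarith)
    constructor
    · have : c ≤ 2 ^ (p - 1) - 1 := by nlinarith
      nlinarith
    · nlinarith

lemma deriv_bounds_add_large {p c : ℝ} (hp : 1 < p) (hc : c = (p - 1) / (p * (2 : ℝ) ^ p))
    {x : ℝ} (h1 : 1 ≤ x) :
    c * x ^ (p - 1) ≤ (1 + x) ^ (p - 1) - 1 ∧ (1 + x) ^ (p - 1) - 1 ≤ 2 ^ p * x ^ (p - 1) := by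
  obtain ⟨hc0, hcq, -, hc2⟩ := refineConst_bounds hp hc
  have hq0 : 0 ≤ p - 1 := by linarith
  have hxq : 1 ≤ x ^ (p - 1) := Real.one_le_rpow h1 hq0
  have e2 : (2 : ℝ) ^ p = 2 * 2 ^ (p - 1) := by
    rw [Real.rpow_sub_one (by norm_num)]; ring
  have hpos : 0 < (2 : ℝ) ^ (p - 1) := by positivity
  constructor
  · have hmono : x ^ (p - 1) ≤ (1 + x) ^ (p - 1) :=
      Real.rpow_le_rpow (by linarith) (by linarith) hq0
    have h2x : (2 : ℝ) ^ (p - 1) ≤ (1 + x) ^ (p - 1) :=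
      Real.rpow_le_rpow (by norm_num) (by linarith) hq0
    have h2 : 1 ≤ (2 : ℝ) ^ (p - 1) * (1 - c) := by
      rcases le_total 1 (p - 1) with hq | hq
      · have : (2 : ℝ) ≤ 2 ^ (p - 1) := by
          simpa using Real.rpow_le_rpow_of_exponent_le (by norm_num : (1 : ℝ) ≤ 2) hq
        nlinarith
      · have := one_le_two_rpow_mul hq0 hq
        nlinarith
    -- `(1 + x) ^ (p - 1)` dominates both `x ^ (p - 1)` and `2 ^ (p - 1) ≥ 1 / (1 - c)`, and
    -- whichever of the two is larger suffices.
    rcases le_total 1 (x ^ (p - 1) * (1 - c)) with h | h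
    · nlinarith
    · have : x ^ (p - 1) ≤ 2 ^ (p - 1) := by
        by_contra hlt
        push Not at hlt
        nlinarith
      nlinarith
  · have : (1 + x) ^ (p - 1) ≤ 2 ^ (p - 1) * x ^ (p - 1) := by
      rw [← Real.mul_rpow (by norm_num) (by linarith)]
      exact Real.rpow_le_rpow (by linarith) (by linarith) hq0
    nlinarith [mul_pos hpos (by linarith : 0 < x ^ (p - 1))]

lemma deriv_bounds_sub_small {p c : ℝ} (hp : 1 < p) (hc : c = (p - 1) / (p * (2 : ℝ) ^ p))
    {x : ℝ} (h0 : 0 ≤ x) (h1 : x ≤ 1) :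
    c * x ≤ 1 - (1 - x) ^ (p - 1) ∧ 1 - (1 - x) ^ (p - 1) ≤ 2 ^ p * x := by
  obtain ⟨hc0, hcq, -, hc2⟩ := refineConst_bounds hp hc
  have h2p : 1 + p * 1 ≤ (1 + 1 : ℝ) ^ p := one_add_mul_self_le_rpow_one_add (by norm_num) hp.le
  norm_num at h2p
  rcases le_total 1 (p - 1) with hq | hq
  · have hB := one_add_mul_self_le_rpow_one_add (by linarith : (-1 : ℝ) ≤ -x) hq
    have hC := Real.rpow_le_rpow_of_exponent_ge_of_imp (by linarith : 0 ≤ 1 - x) (by linarith) hq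
      (fun _ h => by linarith)
    rw [Real.rpow_one] at hC
    rw [← sub_eq_add_neg] at hB
    constructor <;> nlinarith
  · have hB := rpow_one_add_le_one_add_mul_self (by linarith : (-1 : ℝ) ≤ -x) (by linarith) hq
    have hC := Real.rpow_le_rpow_of_exponent_ge_of_imp (by linarith : 0 ≤ 1 - x) (by linarith) hq
      (fun _ h => by linarith)
    rw [Real.rpow_one] at hC
    rw [← sub_eq_add_neg] at hB
    constructor <;> nlinarith

lemma deriv_bounds_sub_large {p c : ℝ} (hp : 1 < p) (hc : c = (p - 1) / (p * (2 : ℝ) ^ p))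
    {x : ℝ} (h1 : 1 ≤ x) :
    c * x ^ (p - 1) ≤ (x - 1) ^ (p - 1) + 1 ∧ (x - 1) ^ (p - 1) + 1 ≤ 2 ^ p * x ^ (p - 1) := by
  obtain ⟨hc0, -, hc1, hc2⟩ := refineConst_bounds hp hc
  have hq0 : 0 ≤ p - 1 := by linarith
  have hxq : 1 ≤ x ^ (p - 1) := Real.one_le_rpow h1 hq0
  have hyq : 0 ≤ (x - 1) ^ (p - 1) := Real.rpow_nonneg (by linarith) _
  have e2 : (2 : ℝ) ^ p = 2 * 2 ^ (p - 1) := by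
    rw [Real.rpow_sub_one (by norm_num)]; ring
  have hpos : 1 ≤ (2 : ℝ) ^ (p - 1) := Real.one_le_rpow (by norm_num) hq0
  constructor
  · have : x ^ (p - 1) ≤ 2 ^ (p - 1) * ((x - 1) ^ (p - 1) + 1) := by
      rcases le_total x 2 with h | h
      · have := Real.rpow_le_rpow (by linarith) h hq0
        nlinarith
      · have h3 : x ^ (p - 1) ≤ 2 ^ (p - 1) * (x - 1) ^ (p - 1) := by
          rw [← Real.mul_rpow (by norm_num) (by linarith)]
          exact Real.rpow_le_rpow (by linarith) (by linarith) hq0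
        nlinarith
    have h4 : c * 2 ^ (p - 1) ≤ 1 := by nlinarith
    calc c * x ^ (p - 1) ≤ c * (2 ^ (p - 1) * ((x - 1) ^ (p - 1) + 1)) := by gcongr
      _ = (c * 2 ^ (p - 1)) * ((x - 1) ^ (p - 1) + 1) := by ring
      _ ≤ 1 * ((x - 1) ^ (p - 1) + 1) := by gcongr
      _ = _ := one_mul _
  · have : (x - 1) ^ (p - 1) ≤ x ^ (p - 1) :=
      Real.rpow_le_rpow (by linarith) (by linarith) hq0
    nlinarith

/-! ### Bregman remainder of the power function -/

/-- The normalised two-sided estimate: the Bregman remainder of `|·|^p` at `1` is comparable to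
`γ_p(1, ·)`. -/
lemma bregman_one_bounds {p c : ℝ} (hp : 1 < p) (hc : c = (p - 1) / (p * (2 : ℝ) ^ p)) (s : ℝ) :
    c * gammaP p 1 s ≤ |1 - s| ^ p - 1 + p * s ∧
      |1 - s| ^ p - 1 + p * s ≤ 2 ^ p * gammaP p 1 s := by
  have dpow : ∀ y : ℝ, HasDerivAt (fun y : ℝ => y ^ p) (p * y ^ (p - 1)) y := fun y =>
    Real.hasDerivAt_rpow_const (Or.inr hp.le)
  have hp0 : p ≠ 0 := by linarith
  have P := bounds_of_deriv_bounds hp (k := c) (K := 2 ^ p)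
    (F₁ := fun x => (1 + x) ^ p - 1 - p * x) (D₁ := fun x => (1 + x) ^ (p - 1) - 1)
    (F₂ := fun x => (1 + x) ^ p - 1 - p * x) (D₂ := fun x => (1 + x) ^ (p - 1) - 1)
    (fun x _ _ => by
      have := ((((dpow (1 + x)).comp x ((hasDerivAt_id x).const_add 1)).sub_const 1).sub
        ((hasDerivAt_id x).const_mul p))
      exact this.congr_deriv (by ring))
    (fun x _ => by
      have := ((((dpow (1 + x)).comp x ((hasDerivAt_id x).const_add 1)).sub_const 1).sub
        ((hasDerivAt_id x).const_mul p))
      exact this.congr_deriv (by ring))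
    (by simp) rfl
    (fun x h0 h1 => deriv_bounds_add_small hp hc h0 h1)
    (fun x h1 => deriv_bounds_add_large hp hc h1)
  have N := bounds_of_deriv_bounds hp (k := c) (K := 2 ^ p)
    (F₁ := fun x => (1 - x) ^ p - 1 + p * x) (D₁ := fun x => 1 - (1 - x) ^ (p - 1))
    (F₂ := fun x => (x - 1) ^ p - 1 + p * x) (D₂ := fun x => (x - 1) ^ (p - 1) + 1)
    (fun x _ _ => by
      have := ((((dpow (1 - x)).comp x ((hasDerivAt_id x).const_sub 1)).sub_const 1).add
        ((hasDerivAt_id x).const_mul p))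
      exact this.congr_deriv (by ring))
    (fun x _ => by
      have := ((((dpow (x - 1)).comp x ((hasDerivAt_id x).sub_const 1)).sub_const 1).add
        ((hasDerivAt_id x).const_mul p))
      exact this.congr_deriv (by ring))
    (by simp) (by simp)
    (fun x h0 h1 => deriv_bounds_sub_small hp hc h0 h1)
    (fun x h1 => deriv_bounds_sub_large hp hc h1)
  unfold gammaP
  simp only [Real.one_rpow, mul_one]
  rcases le_total 0 s with hs | hs
  · rw [abs_of_nonneg hs]
    split_ifs with h
    · rw [abs_of_nonneg (by linarith : 0 ≤ 1 - s)]
      exact N.1 s hs h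
    · rw [abs_of_nonpos (by linarith : 1 - s ≤ 0), neg_sub]
      exact N.2 s (by linarith)
  · rw [abs_of_nonpos hs, abs_of_nonneg (by linarith : 0 ≤ 1 - s)]
    split_ifs with h
    · have := P.1 (-s) (by linarith) h
      simpa only [neg_sq, mul_neg, sub_neg_eq_add, ← sub_eq_add_neg] using this
    · have := P.2 (-s) (by linarith)
      simpa only [neg_sq, mul_neg, sub_neg_eq_add, ← sub_eq_add_neg] using this

lemma gammaP_zero_left {p : ℝ} (hp : 1 < p) (x : ℝ) : gammaP p 0 x = |x| ^ p := by
  have hp0 : p ≠ 0 := by linarith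
  unfold gammaP
  split_ifs with h
  · have : x = 0 := abs_eq_zero.1 (le_antisymm h (abs_nonneg x))
    simp [this, Real.zero_rpow hp0]
  · simp [Real.zero_rpow hp0]

lemma gammaP_abs_mul {p y : ℝ} (hy : y ≠ 0) (s : ℝ) :
    gammaP p |y| (y * s) = |y| ^ p * gammaP p 1 s := by
  have hy' : 0 < |y| := abs_pos.2 hy
  have e : |y * s| ≤ |y| ↔ |s| ≤ 1 := by
    rw [abs_mul]; exact mul_le_iff_le_one_right hy'
  unfold gammaP
  simp only [e, Real.one_rpow, mul_one]
  split_ifs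
  · have : |y| ^ p = |y| ^ (p - 2) * y ^ 2 := by
      rw [← sq_abs y, ← Real.rpow_natCast, ← Real.rpow_add hy']; norm_num
    rw [this]; ring
  · rw [abs_mul, Real.mul_rpow hy'.le (abs_nonneg s)]; ring

/-- Scalar form of the iterative refinement estimate: up to the factors `(p - 1) / (p 2 ^ p)` and
`2 ^ p`, `γ_p(|y|, ·)` is the Bregman remainder of `|·|^p` at `y`. -/
lemma bregman_bounds {p c : ℝ} (hp : 1 < p) (hc : c = (p - 1) / (p * (2 : ℝ) ^ p)) (y D : ℝ) :
    c * gammaP p |y| D ≤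
        |y - D| ^ p - |y| ^ p + (if y = 0 then 0 else p * |y| ^ (p - 2) * y) * D ∧
      |y - D| ^ p - |y| ^ p + (if y = 0 then 0 else p * |y| ^ (p - 2) * y) * D ≤
        2 ^ p * gammaP p |y| D := by
  by_cases hy : y = 0
  · obtain ⟨hc0, -, -, hc2⟩ := refineConst_bounds hp hc
    have hp0 : p ≠ 0 := by linarith
    have hD : 0 ≤ |D| ^ p := by positivity
    have h2 : (1 : ℝ) ≤ 2 ^ p := Real.one_le_rpow (by norm_num) (by linarith)
    subst hy
    simp only [abs_zero, gammaP_zero_left hp, zero_sub, abs_neg, Real.zero_rpow hp0, if_true]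
    constructor <;> nlinarith
  · obtain ⟨s, rfl⟩ : ∃ s, D = y * s := ⟨D / y, by field_simp⟩
    have hy' : 0 < |y| := abs_pos.2 hy
    have hyp : 0 < |y| ^ p := by positivity
    have e1 : |y - y * s| ^ p = |y| ^ p * |1 - s| ^ p := by
      rw [← Real.mul_rpow hy'.le (abs_nonneg _), ← abs_mul]; ring_nf
    have e2 : |y| ^ p = |y| ^ (p - 2) * y ^ 2 := by
      rw [← sq_abs y, ← Real.rpow_natCast, ← Real.rpow_add hy']; norm_num
    have e3 : |y - y * s| ^ p - |y| ^ p + p * |y| ^ (p - 2) * y * (y * s) =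
        |y| ^ p * (|1 - s| ^ p - 1 + p * s) := by
      rw [e1]; linear_combination (-p * s) * e2
    rw [if_neg hy, e3, gammaP_abs_mul hy]
    obtain ⟨hl, hu⟩ := bregman_one_bounds hp hc s
    constructor
    · nlinarith [mul_le_mul_of_nonneg_left hl hyp.le]
    · nlinarith [mul_le_mul_of_nonneg_left hu hyp.le]

/-! ### Scaling of the smoothed power -/

/-- `γ_p(1, ·)` shrinks by at least `l ^ min(2, p)` under scaling by `l ≤ 1`. -/
lemma gammaP_one_scale {p l : ℝ} (hp : 1 < p) (hl0 : 0 < l) (hl1 : l ≤ 1) (x : ℝ) :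
    gammaP p 1 (l * x) ≤ l * l ^ min 1 (p - 1) * gammaP p 1 x := by
  wlog hx : 0 ≤ x generalizing x
  · have := this (-x) (by linarith)
    simpa [gammaP] using this
  have hlx : 0 ≤ l * x := by positivity
  have hlxx : l * x ≤ x := by nlinarith
  unfold gammaP
  simp only [abs_of_nonneg hx, abs_of_nonneg hlx, Real.one_rpow, mul_one]
  rcases le_total 1 (p - 1) with hq | hq
  · rw [min_eq_left hq, Real.rpow_one]
    split_ifs with h1 h2 h2
    · apply le_of_eq; ring
    · have hx1 : 1 < x := not_le.1 h2
      -- Bernoulli for `(x ^ 2) ^ (p / 2)`: the quadratic branch lies below the power branch.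
      have hB := one_add_mul_self_le_rpow_one_add (by nlinarith : (-1 : ℝ) ≤ x ^ 2 - 1)
        (by linarith : 1 ≤ p / 2)
      have e : (1 + (x ^ 2 - 1)) ^ (p / 2) = x ^ p := by
        rw [add_sub_cancel, ← Real.rpow_natCast, ← Real.rpow_mul hx]
        congr 1; push_cast; ring
      rw [e] at hB
      have : p / 2 * x ^ 2 ≤ x ^ p + (p / 2 - 1) := by linarith
      nlinarith [mul_pos hl0 hl0]
    · linarith
    · have h1' : 1 < l * x := not_le.1 h1
      have hz : 1 ≤ (l * x) ^ p := Real.one_le_rpow h1'.le (by linarith)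
      -- The tangent line bound `l ^ (2 - p) ≥ 1 + (p / 2 - 1) (1 - l ^ 2)`.
      have hlog : Real.log (l ^ 2) ≤ l ^ 2 - 1 := Real.log_le_sub_one_of_pos (by positivity)
      rw [Real.log_pow] at hlog
      push_cast at hlog
      have hT : 1 + (p / 2 - 1) * (1 - l ^ 2) ≤ l ^ (2 - p) := by
        rw [Real.rpow_def_of_pos hl0]
        have := Real.add_one_le_exp (Real.log l * (2 - p))
        nlinarith
      have e : l * l * x ^ p = l ^ (2 - p) * (l * x) ^ p := by
        rw [Real.mul_rpow hl0.le hx, ← mul_assoc, ← Real.rpow_add hl0]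
        norm_num [sq]
      have hs : 0 ≤ (p / 2 - 1) * (1 - l ^ 2) := mul_nonneg (by linarith) (by nlinarith)
      rw [mul_add, e]
      nlinarith
  · rw [min_eq_right hq]
    have e : l * l ^ (p - 1) = l ^ p := by
      rw [Real.rpow_sub_one hl0.ne']; field_simp
    have hlp : 0 < l ^ p := by positivity
    have hlp1 : l ^ p ≤ 1 := Real.rpow_le_one hl0.le hl1 (by linarith)
    have hsq : ∀ z : ℝ, 0 ≤ z → z ≤ 1 → z ^ 2 ≤ z ^ p := by
      intro z hz hz1
      rw [← Real.rpow_two]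
      exact Real.rpow_le_rpow_of_exponent_ge_of_imp hz hz1 (by linarith)
        (fun _ h => by linarith)
    rw [e]
    split_ifs with h1 h2 h2
    · have := hsq l hl0.le hl1
      have : 0 ≤ p / 2 * x ^ 2 := by positivity
      nlinarith
    · have hxp : 1 ≤ x ^ p := Real.one_le_rpow (not_le.1 h2).le (by linarith)
      have := hsq _ hlx h1
      rw [Real.mul_rpow hl0.le hx] at this
      have h3 : p / 2 * x ^ p ≤ x ^ p + (p / 2 - 1) := by nlinarith
      nlinarith
    · linarith
    · rw [Real.mul_rpow hl0.le hx]
      nlinarith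

lemma gammaP_scale {p l : ℝ} (hp : 1 < p) (hl0 : 0 < l) (hl1 : l ≤ 1) (y x : ℝ) :
    gammaP p |y| (l * x) ≤ l * l ^ min 1 (p - 1) * gammaP p |y| x := by
  by_cases hy : y = 0
  · subst hy
    have hx : 0 ≤ |x| ^ p := by positivity
    rw [abs_zero, gammaP_zero_left hp, gammaP_zero_left hp, abs_mul, abs_of_pos hl0,
      Real.mul_rpow hl0.le (abs_nonneg x)]
    refine mul_le_mul_of_nonneg_right ?_ hx
    have e : l ^ p = l * l ^ (p - 1) := by rw [Real.rpow_sub_one hl0.ne']; field_simp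
    rw [e]
    exact mul_le_mul_of_nonneg_left
      (Real.rpow_le_rpow_of_exponent_ge hl0 hl1 (min_le_right _ _)) hl0.le
  · obtain ⟨s, rfl⟩ : ∃ s, x = y * s := ⟨x / y, by field_simp⟩
    have hyp : 0 ≤ |y| ^ p := by positivity
    rw [show l * (y * s) = y * (l * s) by ring, gammaP_abs_mul hy, gammaP_abs_mul hy]
    nlinarith [mul_le_mul_of_nonneg_left (gammaP_one_scale hp hl0 hl1 s) hyp]

/-! ### The refinement step -/

/-- Progress of one step of iterative refinement for `p`-norm minimization. -/
theorem iterative_refinement_progress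
    {n d : ℕ}
    (p α : ℝ) (hp : 1 < p) (hα : 1 < α)
    (A : Matrix (Fin n) (Fin d) ℝ) (b : Fin d → ℝ)
    (x : Fin n → ℝ) (hx : Aᵀ *ᵥ x = b)
    (g : Fin n → ℝ)
    (hg : ∀ i, g i = if x i = 0 then 0 else p * |x i| ^ (p - 2) * x i)
    (f : (Fin n → ℝ) → ℝ)
    (hf : ∀ Δ : Fin n → ℝ,
      f Δ = g ⬝ᵥ Δ - (p - 1) / (p * (2 : ℝ) ^ p) * gammaVec p (fun i => |x i|) Δ)
    (xopt : Fin n → ℝ) (hxopt_feas : Aᵀ *ᵥ xopt = b)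
    (hxopt_min : ∀ y : Fin n → ℝ, Aᵀ *ᵥ y = b → pnormP p xopt ≤ pnormP p y)
    (Δhat : Fin n → ℝ)
    (happrox : ∀ Δ : Fin n → ℝ, Aᵀ *ᵥ Δ = 0 → (1 / α) * f Δ ≤ f Δhat)
    (lam : ℝ) (hlam : lam = ((p - 1) / (p * (4 : ℝ) ^ p)) ^ (1 / min 1 (p - 1))) :
    pnormP p (x - lam • Δhat) - pnormP p xopt ≤
      (1 - lam / α) * (pnormP p x - pnormP p xopt) := by
  obtain ⟨c, hc⟩ : ∃ c, c = (p - 1) / (p * (2 : ℝ) ^ p) := ⟨_, rfl⟩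
  rw [← hc] at hf
  have hm : 0 < min 1 (p - 1) := lt_min one_pos (by linarith)
  have h4 : (4 : ℝ) ^ p = 2 ^ p * 2 ^ p := by
    rw [← Real.mul_rpow (by norm_num) (by norm_num)]; norm_num
  have h2 : (1 : ℝ) ≤ 2 ^ p := Real.one_le_rpow (by norm_num) (by linarith)
  have hκ0 : 0 < (p - 1) / (p * (4 : ℝ) ^ p) := div_pos (by linarith) (by positivity)
  have hκ1 : (p - 1) / (p * (4 : ℝ) ^ p) ≤ 1 := by
    rw [div_le_one (by positivity), h4]
    nlinarith [mul_le_mul h2 h2 zero_le_one (by linarith)]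
  have hl0 : 0 < lam := by rw [hlam]; positivity
  have hl1 : lam ≤ 1 := by rw [hlam]; exact Real.rpow_le_one hκ0.le hκ1 (by positivity)
  have hlm : 2 ^ p * lam ^ min 1 (p - 1) = c := by
    rw [hlam, ← Real.rpow_mul hκ0.le, one_div_mul_cancel hm.ne', Real.rpow_one, hc, h4]
    field_simp
  -- The Bregman remainder at `x`, in both directions, in terms of `f`.
  have hlow : pnormP p x - pnormP p xopt ≤ f (x - xopt) := by
    rw [hf]
    simp only [pnormP, gammaVec, dotProduct, Finset.mul_sum, ← Finset.sum_sub_distrib]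
    refine Finset.sum_le_sum fun i _ => ?_
    have h := (bregman_bounds hp hc (x i) ((x - xopt) i)).1
    rw [← hg i] at h
    have e : x i - (x - xopt) i = xopt i := by simp
    rw [e] at h
    linarith
  have hup : pnormP p (x - lam • Δhat) ≤ pnormP p x - lam * f Δhat := by
    rw [hf]
    simp only [pnormP, gammaVec, dotProduct, Finset.mul_sum, ← Finset.sum_sub_distrib]
    refine Finset.sum_le_sum fun i _ => ?_
    have h := (bregman_bounds hp hc (x i) (lam * Δhat i)).2
    rw [← hg i] at h
    have hs := mul_le_mul_of_nonneg_left (gammaP_scale hp hl0 hl1 (x i) (Δhat i))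
      (by linarith : (0 : ℝ) ≤ 2 ^ p)
    have e : 2 ^ p * (lam * lam ^ min 1 (p - 1) * gammaP p |x i| (Δhat i)) =
        lam * (c * gammaP p |x i| (Δhat i)) := by rw [← hlm]; ring
    rw [e] at hs
    simp only [Pi.sub_apply, Pi.smul_apply, smul_eq_mul]
    linarith
  have hfeas : Aᵀ *ᵥ (x - xopt) = 0 := by rw [Matrix.mulVec_sub, hx, hxopt_feas, sub_self]
  have ha := happrox _ hfeas
  have hα0 : 0 < 1 / α := by positivity
  have h5 : lam * ((1 / α) * (pnormP p x - pnormP p xopt)) ≤ lam * f Δhat :=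
    mul_le_mul_of_nonneg_left
      ((mul_le_mul_of_nonneg_left hlow hα0.le).trans ha) hl0.le
  have e : (1 - lam / α) * (pnormP p x - pnormP p xopt) =
      (pnormP p x - pnormP p xopt) - lam * ((1 / α) * (pnormP p x - pnormP p xopt)) := by ring
  rw [e]
  linarith
end

section
/- Mixed (2,∞)-norm relaxation of the smoothed p-norm problem: Let p ≥ 2, Ā ∈ ℝ^{n×d}, b̄ ∈ ℝ^d, t ∈ ℝⁿ with t ≥ 0 entrywise, and ĵ ∈ ℤ. Let Δ̂ attain the minimum of γ_p(t, Δ) over {Δ ∈ ℝⁿ : ĀᵀΔ = b̄}, and assume 2^{ĵ−1} ≤ γ_p(t, Δ̂) < 2^{ĵ}. Let q ∈ ℤ with q ≤ −2, and define r, s ∈ ℝⁿ by rᵢ := tᵢ^{p−2}/2^{max{ĵ,q}+2} and sᵢ := (1/2^{max{ĵ,q+1}+p+1})^{1/p}. Then: (i) ‖Δ̂‖_r² + ‖s⊙Δ̂‖_∞ ≤ 1, so min{‖Δ‖_r² + ‖s⊙Δ‖_∞ : ĀᵀΔ = b̄} ≤ 1; and (ii) for every Δ̄ ∈ ℝⁿ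 and θ ≥ 0 with ‖Δ̄‖_r² + ‖s⊙Δ̄‖_∞ ≤ θ, one has γ_p(t, n^{−1/p}·Δ̄) ≤ p·(4θ + 2^{p+1}·θ^p)·max{γ_p(t, Δ̂), 2^q}. -/
/-!
Pointwise, the smoothed `p`-norm is comparable to a weighted square plus a `p`-th power:
for `p ≥ 2` and `t ≥ 0`, both `t ^ (p - 2) * x ^ 2` and `|x| ^ p` are at most `γ_p(t, x)`
(`quad_le_gammaP`, `abs_rpow_le_gammaP`), while
`γ_p(t, x) ≤ p / 2 * t ^ (p - 2) * x ^ 2 + |x| ^ p` (`gammaP_le_quad_add`).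

The lower bounds give part (i): since `γ_p(t, Δ̂) < 2 ^ ĵ`, the weights make `‖Δ̂‖_r²` at most `1 / 4`
and every `|sᵢ Δ̂ᵢ|` at most `1 / 2`. For part (ii), the mixed bound `θ` controls
`∑ tᵢ ^ (p - 2) Δ̄ᵢ²` by `θ * 2 ^ (max ĵ q + 2)` and each `|Δ̄ᵢ| ^ p` by
`θ ^ p * 2 ^ (max ĵ (q + 1) + p + 1)`. The factor `n ^ (-1/p)` compensates for summing the second
bound over `n` coordinates, and only shrinks the quadratic part. Both powers `2 ^ max ĵ q` and
`2 ^ max ĵ (q + 1)` are at most `2 * max (γ_p(t, Δ̂)) (2 ^ q)`.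
-/

open Matrix

/-- Weighted square norm: `‖Δ‖_r² = Σᵢ rᵢ Δᵢ²`. -/
noncomputable def wsq {ι : Type*} [Fintype ι] (r Δ : ι → ℝ) : ℝ :=
  ∑ i, r i * (Δ i) ^ 2

/-- The `∞`-norm of a vector: `‖v‖_∞ = maxᵢ |vᵢ|`. -/
noncomputable def linfNorm {ι : Type*} [Fintype ι] (v : ι → ℝ) : ℝ :=
  ⨆ i, |v i|

/-- This includes `y = 0`: for `p = 2` the factor `0 ^ (p - 2)` is `1`, and both sides still vanish. -/
lemma rpow_eq_rpow_sub_two_mul_sq {p y : ℝ} (hp : 2 ≤ p) (hy : 0 ≤ y) :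
    y ^ p = y ^ (p - 2) * y ^ 2 := by
  rw [← Real.rpow_natCast y 2, ← Real.rpow_add' hy (by norm_num; linarith)]
  norm_num

lemma quad_le_gammaP {p t x : ℝ} (hp : 2 ≤ p) (ht : 0 ≤ t) :
    t ^ (p - 2) * x ^ 2 ≤ gammaP p t x := by
  have h0 : 0 ≤ t ^ (p - 2) * x ^ 2 := by positivity
  unfold gammaP
  split_ifs with h
  · nlinarith
  · have h1 : t ^ (p - 2) * x ^ 2 ≤ |x| ^ p := by
      rw [rpow_eq_rpow_sub_two_mul_sq hp (abs_nonneg x), sq_abs]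
      have := Real.rpow_le_rpow ht (not_le.mp h).le (by linarith : 0 ≤ p - 2)
      gcongr
    have h2 : 0 ≤ (p / 2 - 1) * t ^ p :=
      mul_nonneg (by linarith) (Real.rpow_nonneg ht p)
    linarith

lemma abs_rpow_le_gammaP {p t x : ℝ} (hp : 2 ≤ p) (ht : 0 ≤ t) :
    |x| ^ p ≤ gammaP p t x := by
  unfold gammaP
  split_ifs with h
  · have h0 : 0 ≤ t ^ (p - 2) * x ^ 2 := by positivity
    have h1 : |x| ^ p ≤ t ^ (p - 2) * x ^ 2 := by
      rw [rpow_eq_rpow_sub_two_mul_sq hp (abs_nonneg x), sq_abs]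
      have := Real.rpow_le_rpow (abs_nonneg x) h (by linarith : 0 ≤ p - 2)
      gcongr
    nlinarith
  · have h2 : 0 ≤ (p / 2 - 1) * t ^ p :=
      mul_nonneg (by linarith) (Real.rpow_nonneg ht p)
    linarith

lemma gammaP_le_quad_add {p t x : ℝ} (hp : 2 ≤ p) (ht : 0 ≤ t) :
    gammaP p t x ≤ p / 2 * (t ^ (p - 2) * x ^ 2) + |x| ^ p := by
  have h0 : 0 ≤ t ^ (p - 2) * x ^ 2 := by positivity
  have h3 : 0 ≤ |x| ^ p := by positivity
  unfold gammaP
  split_ifs with h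
  · linarith
  · have h1 : t ^ p ≤ t ^ (p - 2) * x ^ 2 := by
      rw [rpow_eq_rpow_sub_two_mul_sq hp ht, ← sq_abs x]
      have := (not_le.mp h).le
      gcongr
    have h2 : (p / 2 - 1) * t ^ p ≤ (p / 2 - 1) * (t ^ (p - 2) * x ^ 2) :=
      mul_le_mul_of_nonneg_left h1 (by linarith)
    linarith

lemma abs_le_linfNorm {n : ℕ} (v : Fin n → ℝ) (i : Fin n) : |v i| ≤ linfNorm v :=
  le_ciSup (f := fun i => |v i|) (Set.finite_range _).bddAbove i

lemma linfNorm_nonneg {n : ℕ} (v : Fin n → ℝ) : 0 ≤ linfNorm v :=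
  Real.iSup_nonneg fun _ => abs_nonneg _

lemma wsq_nonneg {n : ℕ} {r : Fin n → ℝ} (hr : ∀ i, 0 ≤ r i) (v : Fin n → ℝ) : 0 ≤ wsq r v :=
  Finset.sum_nonneg fun i _ => mul_nonneg (hr i) (sq_nonneg _)

/-- Mixed `(2,∞)`-norm relaxation of the smoothed `p`-norm problem. -/
theorem mixed_two_infty_relaxation
    {n d : ℕ} (hn : 0 < n)
    (p : ℝ) (hp : 2 ≤ p)
    (Abar : Matrix (Fin n) (Fin d) ℝ) (bbar : Fin d → ℝ)
    (t : Fin n → ℝ) (ht : ∀ i, 0 ≤ t i)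
    (jhat q : ℤ) (hq : q ≤ -2)
    (Δhat : Fin n → ℝ)
    (hfeas : Abarᵀ *ᵥ Δhat = bbar)
    (hmin : ∀ Δ : Fin n → ℝ, Abarᵀ *ᵥ Δ = bbar → gammaVec p t Δhat ≤ gammaVec p t Δ)
    (hlo : (2 : ℝ) ^ (jhat - 1) ≤ gammaVec p t Δhat)
    (hhi : gammaVec p t Δhat < (2 : ℝ) ^ jhat)
    (r s : Fin n → ℝ)
    (hr : ∀ i, r i = t i ^ (p - 2) / (2 : ℝ) ^ (max jhat q + 2))
    (hs : ∀ i, s i = (1 / (2 : ℝ) ^ (((max jhat (q + 1) : ℤ) : ℝ) + p + 1)) ^ (1 / p)) :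
    (wsq r Δhat + linfNorm (s * Δhat) ≤ 1) ∧
    (sInf ((fun Δ : Fin n → ℝ => wsq r Δ + linfNorm (s * Δ)) ''
        {Δ | Abarᵀ *ᵥ Δ = bbar}) ≤ 1) ∧
    ∀ (Δbar : Fin n → ℝ) (θ : ℝ), 0 ≤ θ →
      wsq r Δbar + linfNorm (s * Δbar) ≤ θ →
      gammaVec p t (fun i => (n : ℝ) ^ (-(1 / p)) * Δbar i) ≤
        p * (4 * θ + (2 : ℝ) ^ (p + 1) * θ ^ p) *
          max (gammaVec p t Δhat) ((2 : ℝ) ^ q) := by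
  have hp0 : 0 < p := by linarith
  have : Nonempty (Fin n) := ⟨⟨0, hn⟩⟩
  set G := gammaVec p t Δhat with hG
  set M : ℝ := (2 : ℝ) ^ max jhat q with hM
  set M' : ℝ := (2 : ℝ) ^ max jhat (q + 1) with hM'
  set B : ℝ := (2 : ℝ) ^ (p + 1) with hB
  have hMpos : 0 < M := by positivity
  have hM'pos : 0 < M' := by positivity
  have hBpos : 0 < B := by positivity
  have hB2 : B = 2 ^ p * 2 := by
    rw [hB, Real.rpow_add (by norm_num), Real.rpow_one]
  have hGM : G ≤ M := hhi.le.trans (zpow_le_zpow_right₀ (by norm_num) (le_max_left _ _))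
  have hGM' : G ≤ M' := hhi.le.trans (zpow_le_zpow_right₀ (by norm_num) (le_max_left _ _))
  -- The lower bound `2 ^ (ĵ - 1) ≤ G` is what lets `2 ^ ĵ` be absorbed into `2 * G`.
  have hj : (2 : ℝ) ^ jhat ≤ 2 * G := by
    rw [zpow_sub_one₀ (by norm_num)] at hlo
    linarith
  have hMle : M ≤ 2 * max G (2 ^ q) := by
    rcases max_choice jhat q with h | h <;> rw [hM, h]
    · linarith [le_max_left G ((2 : ℝ) ^ q)]
    · have : (0 : ℝ) < 2 ^ q := by positivity
      linarith [le_max_right G ((2 : ℝ) ^ q)]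
  have hM'le : M' ≤ 2 * max G (2 ^ q) := by
    rcases max_choice jhat (q + 1) with h | h <;> rw [hM', h]
    · linarith [le_max_left G ((2 : ℝ) ^ q)]
    · rw [zpow_add_one₀ (by norm_num)]
      linarith [le_max_right G ((2 : ℝ) ^ q)]
  have hr' : ∀ i, r i = t i ^ (p - 2) / (M * 4) := by
    intro i
    rw [hr, zpow_add₀ (by norm_num)]
    norm_num [hM]
  have hr0 : ∀ i, 0 ≤ r i := fun i => by
    rw [hr']
    have := Real.rpow_nonneg (ht i) (p - 2)
    positivity
  have hspos : ∀ i, 0 ≤ s i := fun i => by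
    rw [hs]
    positivity
  have hsp : ∀ i, s i ^ p = 1 / (M' * B) := by
    intro i
    rw [hs, ← Real.rpow_mul (by positivity), one_div_mul_cancel hp0.ne', Real.rpow_one, add_assoc,
      Real.rpow_add (by norm_num), Real.rpow_intCast]
  have habs : ∀ (v : Fin n → ℝ) i, |(s * v) i| ^ p = |v i| ^ p / (M' * B) := by
    intro v i
    rw [Pi.mul_apply, abs_mul, abs_of_nonneg (hspos i),
      Real.mul_rpow (hspos i) (abs_nonneg _), hsp]
    ring
  have hwsq : ∀ v : Fin n → ℝ, wsq r v = (∑ i, t i ^ (p - 2) * v i ^ 2) / (M * 4) := by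
    intro v
    rw [wsq, Finset.sum_div]
    refine Finset.sum_congr rfl fun i _ => ?_
    rw [hr']
    ring
  have hpart1 : wsq r Δhat + linfNorm (s * Δhat) ≤ 1 := by
    have h1 : wsq r Δhat ≤ 1 / 4 := by
      have : ∑ i, t i ^ (p - 2) * Δhat i ^ 2 ≤ G :=
        Finset.sum_le_sum fun i _ => quad_le_gammaP hp (ht i)
      rw [hwsq, div_le_iff₀ (by positivity)]
      linarith
    have h2 : linfNorm (s * Δhat) ≤ 1 / 2 := by
      refine ciSup_le fun i => ?_
      rw [← Real.rpow_le_rpow_iff (abs_nonneg _) (by norm_num) hp0, habs,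
        Real.div_rpow (by norm_num) (by norm_num), Real.one_rpow,
        div_le_div_iff₀ (by positivity) (by positivity), hB2]
      have h3 : |Δhat i| ^ p ≤ G :=
        (abs_rpow_le_gammaP hp (ht i)).trans
          (Finset.single_le_sum (f := fun i => gammaP p (t i) (Δhat i))
            (fun k _ => (Real.rpow_nonneg (abs_nonneg _) p).trans (abs_rpow_le_gammaP hp (ht k)))
            (Finset.mem_univ i))
      have h4 : (0 : ℝ) < 2 ^ p := by positivity
      nlinarith
    linarith
  refine ⟨hpart1, ?_, ?_⟩
  · refine le_trans (csInf_le ⟨0, ?_⟩ ⟨Δhat, hfeas, rfl⟩) hpart1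
    rintro _ ⟨v, -, rfl⟩
    exact add_nonneg (wsq_nonneg hr0 v) (linfNorm_nonneg _)
  · intro v θ hθ hv
    have hn1 : (1 : ℝ) ≤ n := by exact_mod_cast hn
    have hn0 : (0 : ℝ) < n := by linarith
    set c : ℝ := (n : ℝ) ^ (-(1 / p)) with hc
    have hc0 : 0 ≤ c := by positivity
    have hc1 : c ≤ 1 := Real.rpow_le_one_of_one_le_of_nonpos hn1 (by
      have : 0 < 1 / p := by positivity
      linarith)
    have hcp : c ^ p = 1 / n := by
      rw [hc, ← Real.rpow_mul hn0.le, neg_mul, one_div_mul_cancel hp0.ne', Real.rpow_neg_one,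
        one_div]
    have hw : ∑ i, t i ^ (p - 2) * v i ^ 2 ≤ θ * (M * 4) := by
      rw [← div_le_iff₀ (by positivity), ← hwsq]
      linarith [linfNorm_nonneg (s * v)]
    have hl : ∀ i, |v i| ^ p ≤ θ ^ p * (M' * B) := by
      intro i
      rw [← div_le_iff₀ (by positivity), ← habs]
      refine Real.rpow_le_rpow (abs_nonneg _) ?_ hp0.le
      linarith [abs_le_linfNorm (s * v) i, wsq_nonneg hr0 v]
    have hpt : ∀ i, gammaP p (t i) (c * v i) ≤
        p / 2 * (t i ^ (p - 2) * v i ^ 2) + 1 / n * (θ ^ p * (M' * B)) := by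
      intro i
      refine (gammaP_le_quad_add hp (ht i)).trans (add_le_add ?_ ?_)
      · have := Real.rpow_nonneg (ht i) (p - 2)
        have h2 : (c * v i) ^ 2 ≤ v i ^ 2 := by
          rw [mul_pow]
          exact mul_le_of_le_one_left (sq_nonneg _) (pow_le_one₀ hc0 hc1)
        gcongr
      · rw [abs_mul, abs_of_nonneg hc0, Real.mul_rpow hc0 (abs_nonneg _), hcp]
        exact mul_le_mul_of_nonneg_left (hl i) (by positivity)
    have hθp : 0 ≤ θ ^ p := by positivity
    have hX : 0 ≤ max G ((2 : ℝ) ^ q) := le_max_of_le_right (by positivity)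
    calc gammaVec p t (fun i => c * v i)
        ≤ ∑ i : Fin n, (p / 2 * (t i ^ (p - 2) * v i ^ 2) + 1 / n * (θ ^ p * (M' * B))) :=
          Finset.sum_le_sum fun i _ => hpt i
      _ = p / 2 * (∑ i, t i ^ (p - 2) * v i ^ 2) + θ ^ p * (M' * B) := by
          rw [Finset.sum_add_distrib, ← Finset.mul_sum, Finset.sum_const, Finset.card_univ,
            Fintype.card_fin, nsmul_eq_mul]
          field_simp
      _ ≤ p / 2 * (θ * (2 * max G (2 ^ q) * 4)) + θ ^ p * (2 * max G (2 ^ q) * B) := by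
          have : θ * (M * 4) ≤ θ * (2 * max G (2 ^ q) * 4) := by gcongr
          have h1 := hw.trans this
          gcongr
      _ ≤ p * (4 * θ + B * θ ^ p) * max G (2 ^ q) := by
          -- The `p`-th power term carries the constant `2`, absorbed by `p ≥ 2`.
          have : 0 ≤ (p - 2) * (θ ^ p * B * max G (2 ^ q)) :=
            mul_nonneg (by linarith) (by positivity)
          linarith
end

section
/- Boundedness of the IPM step computed from rounded data (exact linear solve): Let n ≥ 1, t > 0, h ≥ 0, and let x, s ∈ ℝⁿ have positive entries; set μ := x⊙s and δ_μ := −h·(μ − t·𝟙). Assume ‖(μ − t·𝟙)/t‖₂ ≤ 0.01. Let x̄, s̄, δ̃_μ ∈ ℝⁿ satisfy |x̄ᵢ − xᵢ| ≤ 0.01·xᵢ, |s̄ᵢ − sᵢ| ≤ 0.01·sᵢ, and |(δ̃_μ)ᵢ − (δ_μ)ᵢ| ≤ 0.01·|(δ_μ)ᵢ| for all i. Let A ∈ ℝ^{n×d} have full column rank, let X, S, X̄, S̄ be the diagonal matrices of x, s, x̄, s̄, and define δ̃_s := A (Aᵀ X̄ S̄⁻¹ A)⁻¹ Aᵀ S̄⁻¹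 δ̃_μ and δ̃_x := S̄⁻¹ δ̃_μ − X̄ S̄⁻¹ δ̃_s. Then ‖X⁻¹ δ̃_x‖₂ ≤ 0.15·h and ‖S⁻¹ δ̃_s‖₂ ≤ 0.15·h. -/
/-!
The step satisfies two equations. It solves the rounded linearised complementarity equation
`s̄ δx + x̄ δs = w` with `w = δ̃_μ`, and it is orthogonal, `⟨δx, δs⟩ = 0`, since `δs` lies in the
range of `A` while `Aᵀ δx = 0` by the choice of the projection (`step_orthogonal`). Dividing the
square of the first equation by `x̄ s̄` and summing, the cross terms vanish:
`∑ (s̄/x̄) δx² + ∑ (x̄/s̄) δs² = ∑ w² / (x̄ s̄)` (`energy_identity`).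
Near the central path `x s` is close to `t`, so each weight `s̄/x̄` is comparable to `t / x²`, each
`x̄/s̄` to `t / s²`, and `w² / (x̄ s̄)` to `h² (x s - t)² / t`. Allowing a factor `2` in each
comparison bounds both squared norms by `4 h² ‖(μ - t)/t‖² ≤ (0.02 h)²`, well below `(0.15 h)²`.
-/

open Matrix

theorem inv_diagonal_of_pos {n : ℕ} {a : Fin n → ℝ} (ha : ∀ i, 0 < a i) :
    (Matrix.diagonal a)⁻¹ = Matrix.diagonal (fun i => (a i)⁻¹) := by
  apply Matrix.inv_eq_right_inv
  rw [Matrix.diagonal_mul_diagonal, ← Matrix.diagonal_one]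
  congr 1
  funext i
  exact mul_inv_cancel₀ (ha i).ne'

/-- A positive diagonal weight keeps the Gram matrix of a full-column-rank matrix invertible:
the weighted Gram matrix is positive definite. -/
theorem weighted_gram_isUnit {n d : ℕ} (A : Matrix (Fin n) (Fin d) ℝ)
    (hA : IsUnit (Aᵀ * A).det) {a : Fin n → ℝ} (ha : ∀ i, 0 < a i) :
    IsUnit (Aᵀ * Matrix.diagonal a * A).det := by
  have hinj : Function.Injective A.mulVec := by
    intro u v huv
    have h1 : (Aᵀ * A) *ᵥ u = (Aᵀ * A) *ᵥ v := by
      rw [← Matrix.mulVec_mulVec, ← Matrix.mulVec_mulVec]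
      exact congrArg _ huv
    exact Matrix.mulVec_injective_of_isUnit ((Matrix.isUnit_iff_isUnit_det _).2 hA) h1
  have hD : (Matrix.diagonal a).PosDef := Matrix.PosDef.diagonal ha
  have hP := hD.conjTranspose_mul_mul_same hinj
  rw [Matrix.conjTranspose_eq_transpose_of_trivial] at hP
  exact (Matrix.isUnit_iff_isUnit_det _).1 hP.isUnit

/-- The residual `g - D p` of the weighted projection `p = A (Aᵀ D A)⁻¹ Aᵀ g` is orthogonal
to `p`: the residual is killed by `Aᵀ`, and `p` lies in the range of `A`. -/
theorem step_orthogonal {n d : ℕ} (A : Matrix (Fin n) (Fin d) ℝ) (D : Matrix (Fin n) (Fin n) ℝ)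
    (hM : IsUnit (Aᵀ * D * A).det) (g : Fin n → ℝ) :
    (g - D *ᵥ ((A * (Aᵀ * D * A)⁻¹ * Aᵀ) *ᵥ g)) ⬝ᵥ ((A * (Aᵀ * D * A)⁻¹ * Aᵀ) *ᵥ g) = 0 := by
  have hzero : Aᵀ *ᵥ (g - D *ᵥ ((A * (Aᵀ * D * A)⁻¹ * Aᵀ) *ᵥ g)) = 0 := by
    rw [Matrix.mulVec_sub, Matrix.mulVec_mulVec, Matrix.mulVec_mulVec]
    have : Aᵀ * D * (A * (Aᵀ * D * A)⁻¹ * Aᵀ) = Aᵀ := by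
      calc Aᵀ * D * (A * (Aᵀ * D * A)⁻¹ * Aᵀ)
          = (Aᵀ * D * A) * (Aᵀ * D * A)⁻¹ * Aᵀ := by simp only [Matrix.mul_assoc]
        _ = Aᵀ := by rw [Matrix.mul_nonsing_inv _ hM, Matrix.one_mul]
    rw [this, sub_self]
  generalize g - D *ᵥ ((A * (Aᵀ * D * A)⁻¹ * Aᵀ) *ᵥ g) = r at hzero ⊢
  rw [Matrix.mul_assoc, ← Matrix.mulVec_mulVec, Matrix.dotProduct_mulVec,
    ← Matrix.mulVec_transpose, hzero, zero_dotProduct]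

/-- Pythagoras in the local norms: orthogonality removes the cross terms. -/
theorem energy_identity {n : ℕ} {a b u v w : Fin n → ℝ} (ha : ∀ i, 0 < a i) (hb : ∀ i, 0 < b i)
    (huv : ∑ i, u i * v i = 0) (hw : ∀ i, b i * u i + a i * v i = w i) :
    ∑ i, b i / a i * u i ^ 2 + ∑ i, a i / b i * v i ^ 2 = ∑ i, w i ^ 2 / (a i * b i) := by
  have : ∑ i, w i ^ 2 / (a i * b i)
      = ∑ i, (b i / a i * u i ^ 2 + a i / b i * v i ^ 2 + 2 * (u i * v i)) := by
    refine Finset.sum_congr rfl fun i _ => ?_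
    rw [← hw i]
    have := (ha i).ne'
    have := (hb i).ne'
    field_simp
    ring
  rw [this, Finset.sum_add_distrib, Finset.sum_add_distrib, ← Finset.mul_sum, huv]
  ring

/-- Comparison of the rounded weight `b/a` with `t / x²`; `x` and `s` play symmetric roles. -/
theorem weight_bound {t x s a b u : ℝ} (hx : 0 < x) (ha : 0 < a)
    (ha' : a ≤ 1.01 * x) (hb' : 0.99 * s ≤ b) (hxs : 0.99 * t ≤ x * s) (ht : 0 < t) :
    t * (u / x) ^ 2 ≤ 2 * (b / a * u ^ 2) := by
  have key : t * a ≤ 2 * b * x ^ 2 := by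
    have h1 : t * a ≤ t * (1.01 * x) := by gcongr
    have h2 : 0.99 * s * x ^ 2 ≤ b * x ^ 2 := by gcongr
    have h3 : 0.99 * t * x ≤ x * s * x := by gcongr
    have h4 : 0 < t * x := mul_pos ht hx
    linarith
  have e : 2 * (b / a * u ^ 2) - t * (u / x) ^ 2
      = (2 * b * x ^ 2 - t * a) * (u ^ 2 / (a * x ^ 2)) := by
    field_simp
  have : 0 ≤ (2 * b * x ^ 2 - t * a) * (u ^ 2 / (a * x ^ 2)) :=
    mul_nonneg (by linarith) (by positivity)
  linarith

/-- Comparison of `w² / (x̄ s̄)` with `h² (x s - t)² / t`, for `w` a rounding of `h (t - x s)`. -/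
theorem rhs_bound {t h x s a b m w : ℝ} (hx : 0 < x) (hs : 0 < s)
    (ha' : 0.99 * x ≤ a) (hb' : 0.99 * s ≤ b) (hxs : 0.99 * t ≤ x * s) (ht : 0 < t)
    (hw : |w - -h * m| ≤ 0.01 * |-h * m|) :
    w ^ 2 / (a * b) ≤ 2 * h ^ 2 * t * (m / t) ^ 2 := by
  have ha : 0 ≤ a := by linarith
  have hab : 0.97 * t ≤ a * b := by
    have : (0.99 * x) * (0.99 * s) ≤ a * b := by gcongr
    linarith
  have hw1 : |w| ≤ 1.01 * |-h * m| := by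
    have := abs_sub_abs_le_abs_sub w (-h * m)
    linarith
  have hw2 : w ^ 2 ≤ 1.01 ^ 2 * (h ^ 2 * m ^ 2) := by
    have := pow_le_pow_left₀ (abs_nonneg w) hw1 2
    rw [mul_pow, sq_abs, sq_abs] at this
    linarith
  have hpos : 0 < a * b := by linarith
  rw [div_le_iff₀ hpos]
  have e : 2 * h ^ 2 * t * (m / t) ^ 2 * (0.97 * t) = 1.94 * (h ^ 2 * m ^ 2) := by
    field_simp
    ring
  have h1 : 2 * h ^ 2 * t * (m / t) ^ 2 * (0.97 * t) ≤ 2 * h ^ 2 * t * (m / t) ^ 2 * (a * b) := by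
    gcongr
  have h2 : 0 ≤ h ^ 2 * m ^ 2 := by positivity
  linarith

/-- Boundedness of the IPM step computed from rounded data (exact linear solve). -/
theorem ipm_step_bounded_exact_solve
    {n d : ℕ} (hn : 0 < n)
    (t h : ℝ) (ht : 0 < t) (hh : 0 ≤ h)
    (x s : Fin n → ℝ) (hx : ∀ i, 0 < x i) (hs : ∀ i, 0 < s i)
    (μ δμ : Fin n → ℝ)
    (hμ : μ = x * s)
    (hδμ : δμ = fun i => -h * (μ i - t))
    (hcent : vecNorm2 (fun i => (μ i - t) / t) ≤ 0.01)
    (xb sb δμt : Fin n → ℝ)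
    (hxb : ∀ i, |xb i - x i| ≤ 0.01 * x i)
    (hsb : ∀ i, |sb i - s i| ≤ 0.01 * s i)
    (hδμt : ∀ i, |δμt i - δμ i| ≤ 0.01 * |δμ i|)
    (A : Matrix (Fin n) (Fin d) ℝ) (hA : IsUnit (Aᵀ * A).det)
    (X S Xb Sb : Matrix (Fin n) (Fin n) ℝ)
    (hX : X = Matrix.diagonal x) (hS : S = Matrix.diagonal s)
    (hXb : Xb = Matrix.diagonal xb) (hSb : Sb = Matrix.diagonal sb)
    (δs δx : Fin n → ℝ)
    (hδs : δs = (A * (Aᵀ * Xb * Sb⁻¹ * A)⁻¹ * Aᵀ * Sb⁻¹) *ᵥ δμt)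
    (hδx : δx = Sb⁻¹ *ᵥ δμt - (Xb * Sb⁻¹) *ᵥ δs) :
    vecNorm2 (X⁻¹ *ᵥ δx) ≤ 0.15 * h ∧ vecNorm2 (S⁻¹ *ᵥ δs) ≤ 0.15 * h := by
  subst hμ hδμ hX hS hXb hSb
  have hxl : ∀ i, 0.99 * x i ≤ xb i := fun i => by linarith [(abs_le.1 (hxb i)).1]
  have hxu : ∀ i, xb i ≤ 1.01 * x i := fun i => by linarith [(abs_le.1 (hxb i)).2]
  have hsl : ∀ i, 0.99 * s i ≤ sb i := fun i => by linarith [(abs_le.1 (hsb i)).1]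
  have hsu : ∀ i, sb i ≤ 1.01 * s i := fun i => by linarith [(abs_le.1 (hsb i)).2]
  have hxp : ∀ i, 0 < xb i := fun i => by linarith [hxl i, hx i]
  have hsp : ∀ i, 0 < sb i := fun i => by linarith [hsl i, hs i]
  have hcent2 : ∑ i, (((x * s) i - t) / t) ^ 2 ≤ 0.01 ^ 2 :=
    (Real.sqrt_le_left (by norm_num)).1 hcent
  have hxs : ∀ i, 0.99 * t ≤ x i * s i := by
    intro i
    have h1 : (((x * s) i - t) / t) ^ 2 ≤ 0.01 ^ 2 :=
      (Finset.single_le_sum (f := fun i => (((x * s) i - t) / t) ^ 2)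
        (fun j _ => sq_nonneg _) (Finset.mem_univ i)).trans hcent2
    have h2 := (abs_le.1 (abs_le_of_sq_le_sq h1 (by norm_num))).1
    rw [le_div_iff₀ ht, Pi.mul_apply] at h2
    linarith
  have hD : Matrix.diagonal xb * (Matrix.diagonal sb)⁻¹
      = Matrix.diagonal (fun i => xb i * (sb i)⁻¹) := by
    rw [inv_diagonal_of_pos hsp, Matrix.diagonal_mul_diagonal]
  have hM : IsUnit (Aᵀ * (Matrix.diagonal xb * (Matrix.diagonal sb)⁻¹) * A).det := by
    rw [hD]
    exact weighted_gram_isUnit A hA fun i => mul_pos (hxp i) (inv_pos.2 (hsp i))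
  have horth : ∑ i, δx i * δs i = 0 := by
    have := step_orthogonal A _ hM ((Matrix.diagonal sb)⁻¹ *ᵥ δμt)
    rw [← Matrix.mul_assoc Aᵀ, Matrix.mulVec_mulVec δμt (A * _ * Aᵀ), ← hδs, ← hδx] at this
    exact this
  have hlin : ∀ i, sb i * δx i + xb i * δs i = δμt i := by
    intro i
    rw [hδx, hD, inv_diagonal_of_pos hsp]
    simp only [Pi.sub_apply, Matrix.mulVec_diagonal]
    have := (hsp i).ne'
    field_simp
    ring
  have henergy := energy_identity hxp hsp horth hlin
  have hrhs : ∑ i, δμt i ^ 2 / (xb i * sb i) ≤ 2 * h ^ 2 * t * 0.01 ^ 2 :=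
    calc ∑ i, δμt i ^ 2 / (xb i * sb i)
        ≤ ∑ i, 2 * h ^ 2 * t * (((x * s) i - t) / t) ^ 2 :=
          Finset.sum_le_sum fun i _ =>
            rhs_bound (hx i) (hs i) (hxl i) (hsl i) (hxs i) ht (hδμt i)
      _ ≤ 2 * h ^ 2 * t * 0.01 ^ 2 := by
          rw [← Finset.mul_sum]
          gcongr
  have hp : t * ∑ i, (δx i / x i) ^ 2 ≤ 2 * ∑ i, sb i / xb i * δx i ^ 2 := by
    rw [Finset.mul_sum, Finset.mul_sum]
    exact Finset.sum_le_sum fun i _ => weight_bound (hx i) (hxp i) (hxu i) (hsl i) (hxs i) ht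
  have hq : t * ∑ i, (δs i / s i) ^ 2 ≤ 2 * ∑ i, xb i / sb i * δs i ^ 2 := by
    rw [Finset.mul_sum, Finset.mul_sum]
    exact Finset.sum_le_sum fun i _ => weight_bound (hs i) (hsp i) (hsu i) (hxl i)
      (by rw [mul_comm (s i)]; exact hxs i) ht
  have hp0 : 0 ≤ ∑ i, sb i / xb i * δx i ^ 2 := Finset.sum_nonneg fun i _ =>
    mul_nonneg (div_pos (hsp i) (hxp i)).le (sq_nonneg _)
  have hq0 : 0 ≤ ∑ i, xb i / sb i * δs i ^ 2 := Finset.sum_nonneg fun i _ =>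
    mul_nonneg (div_pos (hxp i) (hsp i)).le (sq_nonneg _)
  have hth : 0 ≤ t * h ^ 2 := by positivity
  have final : ∀ z u : Fin n → ℝ, (∀ i, 0 < z i) →
      t * ∑ i, (u i / z i) ^ 2 ≤ 2 * (2 * h ^ 2 * t * 0.01 ^ 2) →
      vecNorm2 ((Matrix.diagonal z)⁻¹ *ᵥ u) ≤ 0.15 * h := by
    intro z u hz hb
    rw [inv_diagonal_of_pos hz, vecNorm2]
    refine (Real.sqrt_le_left (by positivity)).2 ?_
    have e : ∑ i, ((Matrix.diagonal (fun i => (z i)⁻¹) *ᵥ u) i) ^ 2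
        = ∑ i, (u i / z i) ^ 2 := by
      refine Finset.sum_congr rfl fun i _ => ?_
      rw [Matrix.mulVec_diagonal, div_eq_inv_mul]
    rw [e]
    refine le_of_mul_le_mul_left ?_ ht
    linarith
  -- Each half of the energy is at most the whole, because the other half is nonnegative.
  exact ⟨final x δx hx (by linarith), final s δs hs (by linarith)⟩
end

section
/- Maintenance of centrality along one IPM step with rounded data (exact linear solve): Let n ≥ 1, β := 10⁴, h := 0.1, t₁ > 0, and let x, s ∈ ℝⁿ have positive entries; set μ₁ := x⊙s and δ_μ := −h·(μ₁ − t₁·𝟙). Assume ‖(μ₁ − t₁·𝟙)/t₁‖₂ ≤ 0.01. Let x̄, s̄ ∈ ℝⁿ satisfy |x̄ᵢ − xᵢ| ≤ 0.01·xᵢ and |s̄ᵢ − sᵢ| ≤ 0.01·sᵢ for all i, and let δ̃_μ ∈ ℝⁿ satisfy |(δ̃_μ)ᵢ − (δ_μ)ᵢ| ≤ 0.001·|(δ_μ)ᵢ| for all i. Let A ∈ ℝ^{n×d} have full column rank, let X̄, S̄ be the diagonal matrices of x̄, s̄, and set δ̃_s := A (Aᵀ X̄ S̄⁻¹ A)⁻¹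 Aᵀ S̄⁻¹ δ̃_μ and δ̃_x := S̄⁻¹ δ̃_μ − X̄ S̄⁻¹ δ̃_s. Define μ₂ := (x + δ̃_x)⊙(s + δ̃_s) and t₂ := (1 − 1/(β·√n))·t₁. Then ‖(μ₂ − t₂·𝟙)/t₂‖₂ ≤ 0.01. -/
/-!
The solve is exact, so `δx` and `δs` are orthogonal: `δs` lies in the range of `A`, while `Aᵀ δx = 0`.
Put `P = x̄ ⊙ δs`, `Q = s̄ ⊙ δx` and `w = x̄ ⊙ s̄`. Then `P + Q = δ̃_μ` and `∑ P Q / w = 0`, so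
`P` and `Q` are orthogonal in the inner product weighted by `1 / w`. As `w` is within a few percent
of `t₁`, this gives `∑ (P² + Q²) ≤ 1.1 ∑ δ̃_μ²` (`sum_sq_le_of_weighted_orthogonal`).

With `e = μ₁ - t₁`, entrywise
`μ₂ - t₂ = (e + δ̃_μ) + ((x - x̄) δs + (s - s̄) δx) + δx δs + (t₁ - t₂)`.
The first term is about `0.9 e`. The second is at most `(|P| + |Q|) / 99`, the third equals
`P Q / w` and is of second order, and the last has Euclidean norm `10⁻⁴ t₁`. The factor `0.9`
leaves enough room to absorb the other three terms after squaring with `(p + q)² ≤ 1.05 p² + 21 q²`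
(`entry_sq_le`).
-/

open Matrix

/-- The normal matrix `Aᵀ D A` is nonsingular when `A` has full column rank and `D` is a positive
diagonal matrix. -/
lemma isUnit_det_weighted {n d : ℕ} (A : Matrix (Fin n) (Fin d) ℝ) (hA : IsUnit (Aᵀ * A).det)
    (w : Fin n → ℝ) (hw : ∀ i, 0 < w i) : IsUnit (Aᵀ * Matrix.diagonal w * A).det := by
  have hinj : Function.Injective A.mulVec := by
    intro u v huv
    have h : (Aᵀ * A) *ᵥ u = (Aᵀ * A) *ᵥ v := by
      rw [← Matrix.mulVec_mulVec, ← Matrix.mulVec_mulVec, huv]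
    exact Matrix.mulVec_injective_iff_isUnit.mpr ((Matrix.isUnit_iff_isUnit_det _).mpr hA) h
  have hD : (Matrix.diagonal w).PosDef := Matrix.PosDef.diagonal hw
  have h := hD.conjTranspose_mul_mul_same hinj
  rw [Matrix.conjTranspose_eq_transpose_of_trivial] at h
  exact (Matrix.isUnit_iff_isUnit_det _).mp h.isUnit

/-- Componentwise form of the exact solve: the linearised complementarity equation, and the
orthogonality of the two steps. -/
lemma exact_solve {n d : ℕ} (A : Matrix (Fin n) (Fin d) ℝ) (hA : IsUnit (Aᵀ * A).det)
    (xb sb δ δs δx : Fin n → ℝ) (hx : ∀ i, 0 < xb i) (hs : ∀ i, 0 < sb i)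
    (hδs : δs = (A * (Aᵀ * Matrix.diagonal xb * (Matrix.diagonal sb)⁻¹ * A)⁻¹ * Aᵀ *
      (Matrix.diagonal sb)⁻¹) *ᵥ δ)
    (hδx : δx = (Matrix.diagonal sb)⁻¹ *ᵥ δ -
      (Matrix.diagonal xb * (Matrix.diagonal sb)⁻¹) *ᵥ δs) :
    (∀ i, xb i * δs i + sb i * δx i = δ i) ∧ ∑ i, δx i * δs i = 0 := by
  have hinv : (Matrix.diagonal sb)⁻¹ = Matrix.diagonal (fun i => (sb i)⁻¹) := by
    apply Matrix.inv_eq_right_inv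
    rw [Matrix.diagonal_mul_diagonal, ← Matrix.diagonal_one]
    congr 1
    funext i
    exact mul_inv_cancel₀ (hs i).ne'
  set D := Matrix.diagonal xb * (Matrix.diagonal sb)⁻¹ with hDdef
  have hD : D = Matrix.diagonal (fun i => xb i * (sb i)⁻¹) := by
    rw [hDdef, hinv, Matrix.diagonal_mul_diagonal]
  constructor
  · intro i
    have h := congrFun hδx i
    rw [hD, hinv, Pi.sub_apply, Matrix.mulVec_diagonal, Matrix.mulVec_diagonal] at h
    rw [h]
    have := (hs i).ne'
    field_simp
    ring
  · have hM : Aᵀ * Matrix.diagonal xb * (Matrix.diagonal sb)⁻¹ * A = Aᵀ * D * A := by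
      rw [hDdef, Matrix.mul_assoc Aᵀ]
    rw [hM] at hδs
    have hU : IsUnit (Aᵀ * D * A).det := by
      rw [hD]
      exact isUnit_det_weighted A hA _ fun i => mul_pos (hx i) (inv_pos.mpr (hs i))
    have hz : Aᵀ *ᵥ δx = 0 := by
      rw [hδx, hδs, Matrix.mulVec_sub, Matrix.mulVec_mulVec, Matrix.mulVec_mulVec,
        Matrix.mulVec_mulVec, sub_eq_zero]
      congr 1
      have : Aᵀ * (D * (A * (Aᵀ * D * A)⁻¹ * Aᵀ * (Matrix.diagonal sb)⁻¹)) =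
          ((Aᵀ * D * A) * (Aᵀ * D * A)⁻¹) * (Aᵀ * (Matrix.diagonal sb)⁻¹) := by
        simp only [Matrix.mul_assoc]
      rw [Matrix.mul_nonsing_inv _ hU, Matrix.one_mul] at this
      rw [Matrix.mul_assoc Aᵀ D, this]
    obtain ⟨y, hy⟩ : ∃ y, δs = A *ᵥ y :=
      ⟨(Aᵀ * D * A)⁻¹ *ᵥ (Aᵀ *ᵥ ((Matrix.diagonal sb)⁻¹ *ᵥ δ)), by
        rw [hδs]; simp only [Matrix.mulVec_mulVec, Matrix.mul_assoc]⟩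
    change δx ⬝ᵥ δs = 0
    rw [hy, Matrix.dotProduct_mulVec, ← Matrix.mulVec_transpose, hz, zero_dotProduct]

/-- Pythagoras in the inner product weighted by `1 / w`, transferred to the unweighted one: since
`0.97 t ≤ w ≤ 1.031 t`, the ratio of the weights is at most `1.1`. -/
lemma sum_sq_le_of_weighted_orthogonal {n : ℕ} (P Q w : Fin n → ℝ) (t : ℝ) (ht : 0 < t)
    (hl : ∀ i, 0.97 * t ≤ w i) (hu : ∀ i, w i ≤ 1.031 * t)
    (h0 : ∑ i, P i * Q i / w i = 0) :
    ∑ i, (P i ^ 2 + Q i ^ 2) ≤ 1.1 * ∑ i, (P i + Q i) ^ 2 := by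
  have hw : ∀ i, 0 < w i := fun i => lt_of_lt_of_le (by positivity) (hl i)
  have h1 : ∑ i, (P i ^ 2 + Q i ^ 2) ≤ (1.031 * t) * ∑ i, (P i ^ 2 + Q i ^ 2) / w i := by
    rw [Finset.mul_sum]
    refine Finset.sum_le_sum fun i _ => ?_
    rw [← mul_div_assoc, le_div_iff₀ (hw i), mul_comm]
    exact mul_le_mul_of_nonneg_right (hu i) (by positivity)
  have h2 : ∑ i, (P i ^ 2 + Q i ^ 2) / w i = ∑ i, (P i + Q i) ^ 2 / w i := by
    have : ∑ i, (P i + Q i) ^ 2 / w i =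
        ∑ i, (P i ^ 2 + Q i ^ 2) / w i + 2 * ∑ i, P i * Q i / w i := by
      rw [Finset.mul_sum, ← Finset.sum_add_distrib]
      exact Finset.sum_congr rfl fun i _ => by ring
    rw [this, h0]; ring
  have h3 : (0.97 * t) * ∑ i, (P i + Q i) ^ 2 / w i ≤ ∑ i, (P i + Q i) ^ 2 := by
    rw [Finset.mul_sum]
    refine Finset.sum_le_sum fun i _ => ?_
    rw [← mul_div_assoc, div_le_iff₀ (hw i), mul_comm]
    exact mul_le_mul_of_nonneg_left (hl i) (by positivity)
  have h4 : 0 ≤ t * ∑ i, (P i + Q i) ^ 2 / w i :=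
    mul_nonneg ht.le (Finset.sum_nonneg fun i _ => div_nonneg (sq_nonneg _) (hw i).le)
  rw [h2] at h1
  nlinarith

/-- Squared bound on one entry `(e + f) + r + c + τ` of the new residual, where `f ≈ -0.1 e` is the
requested step, `r` the rounding error of the linear part, `c` the second-order term and `τ` the
change of `t`. -/
lemma entry_sq_le (e f r c τ P Q : ℝ) (hf : |f + 0.1 * e| ≤ 0.001 * |0.1 * e|)
    (hr : |r| ≤ (|P| + |Q|) / 99) (hc : |c| ≤ (|P| + |Q|) / 99) :
    ((e + f) + r + c + τ) ^ 2 ≤ 0.86 * e ^ 2 + 0.1 * (P ^ 2 + Q ^ 2) + 63 * τ ^ 2 := by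
  have hp : (e + f) ^ 2 ≤ 0.811 * e ^ 2 := by
    have h1 : |e + f| ≤ 0.9001 * |e| := by
      calc |e + f| = |0.9 * e + (f + 0.1 * e)| := by congr 1; ring
        _ ≤ |0.9 * e| + |f + 0.1 * e| := abs_add_le _ _
        _ ≤ 0.9001 * |e| := by
          rw [abs_mul] at hf ⊢
          norm_num at hf ⊢
          linarith
    have h2 := pow_le_pow_left₀ (abs_nonneg _) h1 2
    rw [mul_pow, sq_abs, sq_abs] at h2
    nlinarith [sq_nonneg e]
  -- `(|P| + |Q|)² ≤ 2 (P² + Q²)` and `99² = 9801`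
  have hsq : ∀ z : ℝ, |z| ≤ (|P| + |Q|) / 99 → z ^ 2 ≤ 2 / 9801 * (P ^ 2 + Q ^ 2) := by
    intro z hz
    have h2 := pow_le_pow_left₀ (abs_nonneg _) hz 2
    rw [sq_abs] at h2
    nlinarith [sq_nonneg (|P| - |Q|), sq_abs P, sq_abs Q]
  have h1 : ((e + f) + r + c + τ) ^ 2 ≤ 1.05 * (e + f) ^ 2 + 21 * (r + c + τ) ^ 2 := by
    -- Young inequality `2 p q ≤ p² / 20 + 20 q²`
    nlinarith [sq_nonneg ((e + f) - 20 * (r + c + τ))]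
  have h2 : (r + c + τ) ^ 2 ≤ 3 * (r ^ 2 + c ^ 2 + τ ^ 2) := by
    nlinarith [sq_nonneg (r - c), sq_nonneg (r - τ), sq_nonneg (c - τ)]
  nlinarith [hsq r hr, hsq c hc, sq_nonneg e, sq_nonneg P, sq_nonneg Q]

/-- A product of two small numbers, divided by a weight comparable to `t`, is dominated by the
numbers themselves. -/
lemma second_order_le (P Q w t : ℝ) (ht : 0 < t) (hw : 0.97 * t ≤ w)
    (h : P ^ 2 + Q ^ 2 ≤ (0.005 * t) ^ 2) : |P * Q / w| ≤ (|P| + |Q|) / 99 := by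
  have hw0 : 0 < w := lt_of_lt_of_le (by positivity) hw
  have hP : |P| ≤ 0.005 * t := abs_le_of_sq_le_sq (by nlinarith [sq_nonneg Q]) (by positivity)
  rw [abs_div, abs_mul, abs_of_pos hw0, div_le_iff₀ hw0]
  have h1 : |P| * |Q| ≤ 0.005 * t * |Q| := mul_le_mul_of_nonneg_right hP (abs_nonneg _)
  have h2 : |Q| * (0.97 * t) ≤ |Q| * w := mul_le_mul_of_nonneg_left hw (abs_nonneg _)
  have h3 : 0 ≤ |P| * w := by positivity
  have h4 : 0 ≤ |Q| * t := by positivity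
  nlinarith

lemma rounding_le (x xb δ : ℝ) (hx : 0 < x) (h : |xb - x| ≤ 0.01 * x) :
    |(x - xb) * δ| ≤ |xb * δ| / 99 := by
  have hb := abs_le.mp h
  have hxb : 0 < xb := by linarith
  rw [abs_mul, abs_mul, abs_of_pos hxb, abs_sub_comm]
  have : |xb - x| ≤ xb / 99 := by linarith
  calc |xb - x| * |δ| ≤ xb / 99 * |δ| := mul_le_mul_of_nonneg_right this (abs_nonneg _)
    _ = xb * |δ| / 99 := by ring

/-- Maintenance of centrality along one IPM step with rounded data (exact linear solve). -/
theorem ipm_centrality_exact_solve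
    {n d : ℕ} (hn : 0 < n)
    (t₁ : ℝ) (ht₁ : 0 < t₁)
    (x s : Fin n → ℝ) (hx : ∀ i, 0 < x i) (hs : ∀ i, 0 < s i)
    (μ₁ δμ : Fin n → ℝ)
    (hμ₁ : μ₁ = x * s)
    (hδμ : δμ = fun i => -(0.1 : ℝ) * (μ₁ i - t₁))
    (hcent : vecNorm2 (fun i => (μ₁ i - t₁) / t₁) ≤ 0.01)
    (xb sb δμt : Fin n → ℝ)
    (hxb : ∀ i, |xb i - x i| ≤ 0.01 * x i)
    (hsb : ∀ i, |sb i - s i| ≤ 0.01 * s i)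
    (hδμt : ∀ i, |δμt i - δμ i| ≤ 0.001 * |δμ i|)
    (A : Matrix (Fin n) (Fin d) ℝ) (hA : IsUnit (Aᵀ * A).det)
    (Xb Sb : Matrix (Fin n) (Fin n) ℝ)
    (hXb : Xb = Matrix.diagonal xb) (hSb : Sb = Matrix.diagonal sb)
    (δs δx μ₂ : Fin n → ℝ) (t₂ : ℝ)
    (hδs : δs = (A * (Aᵀ * Xb * Sb⁻¹ * A)⁻¹ * Aᵀ * Sb⁻¹) *ᵥ δμt)
    (hδx : δx = Sb⁻¹ *ᵥ δμt - (Xb * Sb⁻¹) *ᵥ δs)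
    (hμ₂ : μ₂ = (x + δx) * (s + δs))
    (ht₂ : t₂ = (1 - 1 / ((10000 : ℝ) * Real.sqrt n)) * t₁) :
    vecNorm2 (fun i => (μ₂ i - t₂) / t₂) ≤ 0.01 := by
  subst hXb hSb
  have hxbp : ∀ i, 0 < xb i := fun i => by linarith [(abs_le.mp (hxb i)).1, hx i]
  have hsbp : ∀ i, 0 < sb i := fun i => by linarith [(abs_le.mp (hsb i)).1, hs i]
  obtain ⟨hlin, horth⟩ := exact_solve A hA xb sb δμt δs δx hxbp hsbp hδs hδx
  set e : Fin n → ℝ := fun i => μ₁ i - t₁ with he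
  have hE : ∑ i, e i ^ 2 ≤ (0.01 * t₁) ^ 2 := by
    unfold vecNorm2 at hcent
    rw [Real.sqrt_le_iff] at hcent
    have h := hcent.2
    simp only [div_pow] at h
    rw [← Finset.sum_div, div_le_iff₀ (by positivity)] at h
    rw [mul_pow]
    exact h
  have hei : ∀ i, |e i| ≤ 0.01 * t₁ := fun i =>
    abs_le_of_sq_le_sq ((Finset.single_le_sum (f := fun i => e i ^ 2)
      (fun j _ => sq_nonneg _) (Finset.mem_univ i)).trans hE) (by positivity)
  have hw : ∀ i, 0.97 * t₁ ≤ xb i * sb i ∧ xb i * sb i ≤ 1.031 * t₁ := by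
    intro i
    have h1 := abs_le.mp (hxb i)
    have h2 := abs_le.mp (hsb i)
    have h3 := abs_le.mp (hei i)
    have h4 : e i = x i * s i - t₁ := by simp [he, hμ₁]
    have hl : (0.99 * x i) * (0.99 * s i) ≤ xb i * sb i :=
      mul_le_mul (by linarith) (by linarith) (by linarith [hs i]) (hxbp i).le
    have hu : xb i * sb i ≤ (1.01 * x i) * (1.01 * s i) :=
      mul_le_mul (by linarith) (by linarith) (hsbp i).le (by linarith [hx i])
    constructor <;> nlinarith
  have hf : ∀ i, |δμt i + 0.1 * e i| ≤ 0.001 * |0.1 * e i| := by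
    intro i
    have h := hδμt i
    have h1 : δμ i = -(0.1 * e i) := by rw [hδμ]; simp [he]
    rwa [h1, sub_neg_eq_add, abs_neg] at h
  have hδsq : ∑ i, δμt i ^ 2 ≤ 0.0101 * ∑ i, e i ^ 2 := by
    rw [Finset.mul_sum]
    refine Finset.sum_le_sum fun i _ => ?_
    have h1 : |δμt i| ≤ 0.1001 * |e i| := by
      have h2 := hf i
      have h3 : |δμt i| ≤ |δμt i + 0.1 * e i| + |0.1 * e i| := by
        simpa using abs_sub (δμt i + 0.1 * e i) (0.1 * e i)
      rw [abs_mul] at h2 h3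
      norm_num at h2 h3 ⊢
      linarith
    have h2 := pow_le_pow_left₀ (abs_nonneg _) h1 2
    rw [mul_pow, sq_abs, sq_abs] at h2
    nlinarith [sq_nonneg (e i)]
  set P : Fin n → ℝ := fun i => xb i * δs i with hP
  set Q : Fin n → ℝ := fun i => sb i * δx i with hQ
  have hPQw : ∀ i, P i * Q i / (xb i * sb i) = δx i * δs i := by
    intro i
    have := (hxbp i).ne'
    have := (hsbp i).ne'
    simp only [hP, hQ]
    field_simp
  have hPQ : ∑ i, (P i ^ 2 + Q i ^ 2) ≤ 0.012 * ∑ i, e i ^ 2 := by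
    have h := sum_sq_le_of_weighted_orthogonal P Q (fun i => xb i * sb i) t₁ ht₁
      (fun i => (hw i).1) (fun i => (hw i).2) (by simp only [hPQw]; exact horth)
    have h2 : ∑ i, (P i + Q i) ^ 2 = ∑ i, δμt i ^ 2 :=
      Finset.sum_congr rfl fun i _ => by rw [← hlin i]
    rw [h2] at h
    have h3 : 0 ≤ ∑ i, e i ^ 2 := Finset.sum_nonneg fun i _ => sq_nonneg _
    linarith
  have hPQi : ∀ i, P i ^ 2 + Q i ^ 2 ≤ (0.005 * t₁) ^ 2 := by
    intro i
    have h := Finset.single_le_sum (f := fun i => P i ^ 2 + Q i ^ 2)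
      (fun j _ => by positivity) (Finset.mem_univ i)
    have h2 : P i ^ 2 + Q i ^ 2 ≤ ∑ i, (P i ^ 2 + Q i ^ 2) := h
    nlinarith [sq_nonneg t₁]
  have hn1 : (1 : ℝ) ≤ n := by exact_mod_cast hn
  have hsqrt : 1 ≤ Real.sqrt n := Real.one_le_sqrt.mpr hn1
  have hτ : (n : ℝ) * (t₁ - t₂) ^ 2 = 0.00000001 * t₁ ^ 2 := by
    have h1 : t₁ - t₂ = t₁ / (10000 * Real.sqrt n) := by rw [ht₂]; ring
    have h0 : (n : ℝ) ≠ 0 := by positivity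
    rw [h1, div_pow, mul_pow, Real.sq_sqrt (by positivity)]
    field_simp
    norm_num
  have ht2 : 0.9999 * t₁ ≤ t₂ := by
    rw [ht₂]
    refine mul_le_mul_of_nonneg_right ?_ ht₁.le
    have : 1 / (10000 * Real.sqrt n) ≤ 1 / 10000 :=
      one_div_le_one_div_of_le (by norm_num) (by linarith)
    linarith
  have ht2p : 0 < t₂ := lt_of_lt_of_le (by positivity) ht2
  have hentry : ∀ i, (μ₂ i - t₂) ^ 2 ≤
      0.86 * e i ^ 2 + 0.1 * (P i ^ 2 + Q i ^ 2) + 63 * (t₁ - t₂) ^ 2 := by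
    intro i
    have hr : |(x i - xb i) * δs i + (s i - sb i) * δx i| ≤ (|P i| + |Q i|) / 99 := by
      have h1 := rounding_le (x i) (xb i) (δs i) (hx i) (hxb i)
      have h2 := rounding_le (s i) (sb i) (δx i) (hs i) (hsb i)
      have h3 := abs_add_le ((x i - xb i) * δs i) ((s i - sb i) * δx i)
      simp only [hP, hQ]
      linarith
    have hc := second_order_le (P i) (Q i) (xb i * sb i) t₁ ht₁ (hw i).1 (hPQi i)
    have h := entry_sq_le (e i) (δμt i) _ _ (t₁ - t₂) (P i) (Q i) (hf i) hr hc
    refine le_of_eq_of_le ?_ h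
    congr 1
    rw [hPQw i, ← hlin i]
    simp only [he, hμ₂, hμ₁, Pi.mul_apply, Pi.add_apply]
    ring
  have htotal : ∑ i, (μ₂ i - t₂) ^ 2 ≤ (0.01 * t₂) ^ 2 := by
    have h1 := Finset.sum_le_sum fun i (_ : i ∈ Finset.univ) => hentry i
    rw [Finset.sum_add_distrib, Finset.sum_add_distrib, ← Finset.mul_sum, ← Finset.mul_sum,
      Finset.sum_const, Finset.card_univ, Fintype.card_fin, nsmul_eq_mul] at h1
    have h2 : (0.9999 * t₁) ^ 2 ≤ t₂ ^ 2 := pow_le_pow_left₀ (by positivity) ht2 2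
    nlinarith
  unfold vecNorm2
  rw [Real.sqrt_le_iff]
  refine ⟨by norm_num, ?_⟩
  simp only [div_pow]
  rw [← Finset.sum_div, div_le_iff₀ (by positivity), ← mul_pow]
  exact htotal
end
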